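/- arXiv:0902.3345 — 5 statements merged into one kernel-verified Lean document; each statement's English description precedes it below -/
import Mathlib

section
/- Let p = (p_1,…,p_m) be real polynomials in n variables such that S = S(p_1,…,p_m) is convex with non-empty interior. If there exists d ≥ 1 such that the d-th Lasserre relaxation of S with respect to p is exact, i.e. S(p)_d = S, then every face of S is exposed. -/
open MvPolynomial

/-- A face of a convex set `S ⊆ ℝⁿ`: a nonempty convex subset `F ⊆ S` such that whenever
`x, y ∈ S`, `λ ∈ (0,1)` and `λx + (1-λ)y ∈ F`, then `x, y ∈ F`. -/
def IsFaceOf {n : ℕ} (S F : Set (Fin n → ℝ)) : Prop :=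
  F.Nonempty ∧ Convex ℝ F ∧ F ⊆ S ∧
    ∀ x ∈ S, ∀ y ∈ S, ∀ l : ℝ, 0 < l → l < 1 →
      l • x + (1 - l) • y ∈ F → x ∈ F ∧ y ∈ F

/-- The affine-linear function `x ↦ c + a·x` on `ℝⁿ`. -/
def affEval {n : ℕ} (a : Fin n → ℝ) (c : ℝ) (x : Fin n → ℝ) : ℝ :=
  c + ∑ i, a i * x i

/-- `F` is an exposed face of `S`: either `F = S` or there is a nonzero affine-linear
function `ℓ` with `ℓ ≥ 0` on `S`, `{ℓ = 0} ∩ S ≠ ∅` and `{ℓ = 0} ∩ S = F`. -/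
def IsExposedFaceOf {n : ℕ} (S F : Set (Fin n → ℝ)) : Prop :=
  F = S ∨ ∃ (a : Fin n → ℝ) (c : ℝ), affEval a c ≠ 0 ∧
    (∀ x ∈ S, 0 ≤ affEval a c x) ∧
    ({x | affEval a c x = 0} ∩ S).Nonempty ∧
    {x | affEval a c x = 0} ∩ S = F

/-- The basic closed semialgebraic set `S(p₁,…,p_m) = {x | p₁(x) ≥ 0, …, p_m(x) ≥ 0}`. -/
def basicClosedSet {n m : ℕ} (p : Fin m → MvPolynomial (Fin n) ℝ) : Set (Fin n → ℝ) :=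
  {x | ∀ i, 0 ≤ eval x (p i)}

/-- `σ` is a sum of squares of polynomials. -/
def IsSOS {n : ℕ} (σ : MvPolynomial (Fin n) ℝ) : Prop :=
  ∃ (r : ℕ) (f : Fin r → MvPolynomial (Fin n) ℝ), σ = ∑ j, f j ^ 2

/-- The truncated quadratic module
`QM(p)_d = {Σᵢ σᵢ pᵢ | σᵢ sums of squares, deg (σᵢ pᵢ) ≤ d}`, where `p₀ = 1`. -/
def QM {n m : ℕ} (p : Fin m → MvPolynomial (Fin n) ℝ) (d : ℕ) :
    Set (MvPolynomial (Fin n) ℝ) :=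
  {q | ∃ σ : Fin (m + 1) → MvPolynomial (Fin n) ℝ,
    (∀ i, IsSOS (σ i)) ∧
    (∀ i, (σ i * (Fin.cons 1 p : Fin (m + 1) → MvPolynomial (Fin n) ℝ) i).totalDegree ≤ d) ∧
    q = ∑ i, σ i * (Fin.cons 1 p : Fin (m + 1) → MvPolynomial (Fin n) ℝ) i}

/-- The `d`-th Lasserre relaxation `S(p)_d = π(L(p)_d)`: the set of points
`(L(t₁),…,L(tₙ))` where `L` is a linear functional with `L ≥ 0` on `QM(p)_d` and
`L(1) = 1`.  (Since `QM(p)_d` consists of polynomials of degree at most `d`, only the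
restriction of `L` to `ℝ[t]_d` matters.) -/
noncomputable def lasserre {n m : ℕ} (p : Fin m → MvPolynomial (Fin n) ℝ) (d : ℕ) :
    Set (Fin n → ℝ) :=
  {x | ∃ L : MvPolynomial (Fin n) ℝ →ₗ[ℝ] ℝ,
    (∀ q ∈ QM p d, 0 ≤ L q) ∧ L 1 = 1 ∧ ∀ i, x i = L (X i)}

open Polynomial Filter Topology in
lemma aux_quad (q : Polynomial ℝ) : ∃ K : ℝ, 0 ≤ K ∧ ∀ τ : ℝ, 0 ≤ τ → τ ≤ 1 →
    q.eval (-τ) ≤ q.coeff 0 - τ * q.coeff 1 + K * τ ^ 2 := by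
  obtain ⟨K, hK⟩ := (isCompact_Icc (a := (0:ℝ)) (b := 1)).exists_bound_of_continuousOn
    (f := fun τ : ℝ => q.divX.divX.eval (-τ))
    ((q.divX.divX.continuous.comp continuous_neg).continuousOn)
  refine ⟨K, (norm_nonneg _).trans (hK 0 (by simp)), fun τ h0 h1 => ?_⟩
  have h := hK τ ⟨h0, h1⟩
  rw [Real.norm_eq_abs] at h
  have h2 := (le_abs_self _).trans h
  have e1 : q.eval (-τ) = q.divX.eval (-τ) * (-τ) + q.coeff 0 := by
    conv_lhs => rw [← Polynomial.divX_mul_X_add q]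
    simp
  have e2 : q.divX.eval (-τ) = q.divX.divX.eval (-τ) * (-τ) + q.coeff 1 := by
    conv_lhs => rw [← Polynomial.divX_mul_X_add q.divX]
    simp [Polynomial.coeff_divX]
  rw [e1, e2]
  nlinarith [mul_le_mul_of_nonneg_right h2 (sq_nonneg τ)]

lemma aux_nodes (d : ℕ) (v : ℕ → ℝ) (hv : Function.Injective v) :
    ∃ K : ℝ, 0 ≤ K ∧ ∀ σ : Polynomial ℝ, σ.natDegree ≤ d → (∀ s, 0 ≤ σ.eval s) →
    ∀ τ : ℝ, 0 ≤ τ → τ ≤ 1 →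
    0 ≤ σ.coeff 0 - τ * σ.coeff 1 + τ ^ 2 * K * ∑ k ∈ Finset.range (d+1), σ.eval (v k) := by
  choose K hK0 hK using fun k : ℕ => aux_quad (Lagrange.basis (Finset.range (d+1)) v k)
  refine ⟨∑ k ∈ Finset.range (d+1), K k, Finset.sum_nonneg fun k _ => hK0 k, ?_⟩
  intro σ hσ hpos τ h0 h1
  have hint : σ = Lagrange.interpolate (Finset.range (d+1)) v (fun k => σ.eval (v k)) := by
    apply Lagrange.eq_interpolate (hv.injOn)
    rw [Finset.card_range]
    exact lt_of_le_of_lt Polynomial.degree_le_natDegree (by exact_mod_cast Nat.lt_succ_of_le hσ)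
  rw [Lagrange.interpolate_apply] at hint
  have c0 : σ.coeff 0 = ∑ k ∈ Finset.range (d+1), σ.eval (v k) *
      (Lagrange.basis (Finset.range (d+1)) v k).coeff 0 := by
    conv_lhs => rw [hint]
    simp only [Polynomial.finsetSum_coeff, Polynomial.coeff_C_mul]
  have c1 : σ.coeff 1 = ∑ k ∈ Finset.range (d+1), σ.eval (v k) *
      (Lagrange.basis (Finset.range (d+1)) v k).coeff 1 := by
    conv_lhs => rw [hint]
    simp only [Polynomial.finsetSum_coeff, Polynomial.coeff_C_mul]
  have ce : σ.eval (-τ) = ∑ k ∈ Finset.range (d+1), σ.eval (v k) *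
      (Lagrange.basis (Finset.range (d+1)) v k).eval (-τ) := by
    conv_lhs => rw [hint]
    simp only [Polynomial.eval_finsetSum, Polynomial.eval_mul, Polynomial.eval_C]
  calc (0:ℝ) ≤ σ.eval (-τ) := hpos _
    _ = _ := ce
    _ ≤ ∑ k ∈ Finset.range (d+1), σ.eval (v k) *
      ((Lagrange.basis (Finset.range (d+1)) v k).coeff 0
        - τ * (Lagrange.basis (Finset.range (d+1)) v k).coeff 1
        + (∑ k ∈ Finset.range (d+1), K k) * τ ^ 2) := by
        refine Finset.sum_le_sum fun k hk => mul_le_mul_of_nonneg_left ?_ (hpos _)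
        refine (hK k τ h0 h1).trans ?_
        have := Finset.single_le_sum (f := K) (fun k _ => hK0 k) hk
        nlinarith [mul_le_mul_of_nonneg_right this (sq_nonneg τ)]
    _ = _ := by
        rw [c0, c1]
        simp only [Finset.mul_sum, ← Finset.sum_sub_distrib, ← Finset.sum_add_distrib]
        refine Finset.sum_congr rfl fun k _ => ?_
        simp only [mul_add, mul_sub, Finset.sum_mul, Finset.mul_sum]
        congr 1
        · ring
        · exact Finset.sum_congr rfl fun _ _ => by ring

/-- restriction to the line x0 + s w -/
noncomputable def lineHom {n : ℕ} (x0 w : Fin n → ℝ) :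
    MvPolynomial (Fin n) ℝ →ₐ[ℝ] Polynomial ℝ :=
  MvPolynomial.aeval fun j => Polynomial.C (x0 j) + Polynomial.C (w j) * Polynomial.X

lemma lineHom_eval {n : ℕ} (x0 w : Fin n → ℝ) (q : MvPolynomial (Fin n) ℝ) (s : ℝ) :
    (lineHom x0 w q).eval s = MvPolynomial.eval (x0 + s • w) q := by
  induction q using MvPolynomial.induction_on with
  | C a => simp [lineHom, Polynomial.algebraMap_eq]
  | add p q hp hq => simp [hp, hq]
  | mul_X p i hp =>
    rw [map_mul, Polynomial.eval_mul, hp]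
    simp only [lineHom, MvPolynomial.aeval_X, map_mul, MvPolynomial.eval_X]
    simp
    left; ring

lemma lineHom_coeff_zero {n : ℕ} (x0 w : Fin n → ℝ) (q : MvPolynomial (Fin n) ℝ) :
    (lineHom x0 w q).coeff 0 = MvPolynomial.eval x0 q := by
  rw [Polynomial.coeff_zero_eq_eval_zero, lineHom_eval]; simp

lemma lineHom_coeff_one {n : ℕ} (x0 w : Fin n → ℝ) (q : MvPolynomial (Fin n) ℝ) :
    (lineHom x0 w q).coeff 1 = ∑ j, MvPolynomial.eval x0 (MvPolynomial.pderiv j q) * w j := by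
  induction q using MvPolynomial.induction_on with
  | C a => simp [lineHom, Polynomial.algebraMap_eq, Polynomial.coeff_C]
  | add p q hp hq => simp [hp, hq, Finset.sum_add_distrib, add_mul]
  | mul_X p i hp =>
    have hX : lineHom x0 w (MvPolynomial.X i) = 
      Polynomial.C (x0 i) + Polynomial.C (w i) * Polynomial.X := by simp [lineHom]
    rw [map_mul, Polynomial.mul_coeff_one, hp, lineHom_coeff_zero, hX]
    simp only [Derivation.leibniz, MvPolynomial.pderiv_X, smul_eq_mul, map_add, map_mul,
      MvPolynomial.eval_X, add_mul, Finset.sum_add_distrib]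
    simp [Pi.single_apply, Finset.sum_mul, apply_ite, Polynomial.coeff_C]
    exact Finset.sum_congr rfl fun _ _ => by ring

lemma lineHom_natDegree {n : ℕ} (x0 w : Fin n → ℝ) (q : MvPolynomial (Fin n) ℝ) :
    (lineHom x0 w q).natDegree ≤ q.totalDegree := by
  rw [lineHom, MvPolynomial.aeval_def, MvPolynomial.eval₂_eq]
  refine Polynomial.natDegree_sum_le_of_forall_le _ _ fun m hm => ?_
  rw [Polynomial.algebraMap_eq]
  refine (Polynomial.natDegree_C_mul_le _ _).trans ?_
  refine (Polynomial.natDegree_prod_le _ _).trans ?_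
  refine le_trans ?_ (MvPolynomial.le_totalDegree hm)
  rw [Finsupp.sum]
  refine Finset.sum_le_sum fun i _ => ?_
  refine Polynomial.natDegree_pow_le.trans ?_
  have : (Polynomial.C (x0 i) + Polynomial.C (w i) * Polynomial.X : Polynomial ℝ).natDegree ≤ 1 := by
    rw [add_comm]; exact Polynomial.natDegree_linear_le
  nlinarith

lemma aux_span {V : Type*} [AddCommGroup V] [Module ℝ V] [FiniteDimensional ℝ V] (A : Set V) :
    ∃ t : Finset V, (t : Set V) ⊆ A ∧
      ∀ f : V →ₗ[ℝ] ℝ, (∀ x ∈ t, f x = 0) → ∀ x ∈ A, f x = 0 := by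
  obtain ⟨t, ht, hs⟩ := (Submodule.fg_span_iff_fg_span_finset_subset A).1
    (IsNoetherian.noetherian (Submodule.span ℝ A))
  refine ⟨t, ht, fun f hf x hx => ?_⟩
  have : Submodule.span ℝ (t : Set V) ≤ LinearMap.ker f := Submodule.span_le.2 hf
  exact this (hs ▸ Submodule.subset_span hx)

/-- pairing -/
noncomputable def pairB {n : ℕ} : (ℝ × (Fin n → ℝ)) →ₗ[ℝ] (ℝ × (Fin n → ℝ)) →ₗ[ℝ] ℝ :=
  LinearMap.mk₂ ℝ (fun u y => u.1 * y.1 + ∑ i, u.2 i * y.2 i)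
    (by intros; simp [add_mul, Finset.sum_add_distrib]; ring)
    (by intros; simp [mul_add, Finset.mul_sum, mul_assoc])
    (by intros; simp [mul_add, Finset.sum_add_distrib]; ring)
    (by intros; simp [mul_add, Finset.mul_sum, mul_left_comm])

lemma pairB_one {n : ℕ} (u : ℝ × (Fin n → ℝ)) (x : Fin n → ℝ) :
    pairB u (1, x) = affEval u.2 u.1 x := by
  simp [pairB, affEval]

lemma IsSOS.eval_nonneg {n : ℕ} {σ : MvPolynomial (Fin n) ℝ} (h : IsSOS σ) (x : Fin n → ℝ) :
    0 ≤ MvPolynomial.eval x σ := by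
  obtain ⟨r, f, rfl⟩ := h
  rw [map_sum]
  exact Finset.sum_nonneg fun j _ => by rw [map_pow]; positivity

/-- a point of a face behaving like a relative interior point -/
lemma aux_relint {n : ℕ} (S F : Set (Fin n → ℝ)) (hF : IsFaceOf S F) :
    ∃ x0 ∈ F, ∀ u : ℝ × (Fin n → ℝ), (∀ x ∈ S, 0 ≤ affEval u.2 u.1 x) →
      affEval u.2 u.1 x0 = 0 → ∀ x ∈ F, affEval u.2 u.1 x = 0 := by
  obtain ⟨hne, hc, hsub, -⟩ := hF
  obtain ⟨t, ht, hs⟩ := aux_span ((fun x : Fin n → ℝ => ((1:ℝ), x)) '' F)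
  have hmem : ∀ y ∈ t, y.2 ∈ F ∧ y = (1, y.2) := by
    intro y hy
    obtain ⟨x, hx, rfl⟩ := ht hy
    exact ⟨hx, rfl⟩
  have htne : t.Nonempty := by
    by_contra h
    rw [Finset.not_nonempty_iff_eq_empty] at h
    obtain ⟨x, hx⟩ := hne
    have := hs (LinearMap.fst ℝ ℝ _) (by simp [h]) (1, x) ⟨x, hx, rfl⟩
    simp at this
  have hN : (0:ℝ) < t.card := by exact_mod_cast htne.card_pos
  refine ⟨∑ y ∈ t, (t.card : ℝ)⁻¹ • y.2, ?_, ?_⟩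
  · refine hc.sum_mem (fun _ _ => by positivity) ?_ (fun y hy => (hmem y hy).1)
    rw [Finset.sum_const, nsmul_eq_mul, mul_inv_cancel₀ hN.ne']
  · intro u hu h0 x hx
    have e : ((1:ℝ), ∑ y ∈ t, (t.card : ℝ)⁻¹ • y.2) = (t.card : ℝ)⁻¹ • ∑ y ∈ t, y := by
      have h1 : ∑ y ∈ t, y.1 = (t.card : ℝ) := by
        rw [Finset.sum_congr rfl (fun y hy => congrArg Prod.fst (hmem y hy).2)]
        simp
      ext1
      · simp [Prod.fst_sum, h1, hN.ne']
      · simp [Prod.snd_sum, Finset.smul_sum]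
    rw [← pairB_one, e, map_smul, map_sum, smul_eq_mul] at h0
    have h0' := (mul_eq_zero.1 h0).resolve_left (by positivity)
    rw [Finset.sum_eq_zero_iff_of_nonneg] at h0'
    · rw [← pairB_one]
      exact hs (pairB u) h0' _ ⟨x, hx, rfl⟩
    · intro y hy
      rw [(hmem y hy).2, pairB_one]
      exact hu _ (hsub (hmem y hy).1)

lemma aux_maxfun {n : ℕ} (S : Set (Fin n → ℝ)) (x0 : Fin n → ℝ) :
    ∃ w : ℝ × (Fin n → ℝ), (∀ x ∈ S, 0 ≤ affEval w.2 w.1 x) ∧ affEval w.2 w.1 x0 = 0 ∧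
      ∀ x ∈ S, affEval w.2 w.1 x = 0 →
        ∀ u : ℝ × (Fin n → ℝ), (∀ x ∈ S, 0 ≤ affEval u.2 u.1 x) →
          affEval u.2 u.1 x0 = 0 → affEval u.2 u.1 x = 0 := by
  obtain ⟨t, ht, hs⟩ := aux_span {u : ℝ × (Fin n → ℝ) | (∀ x ∈ S, 0 ≤ affEval u.2 u.1 x) ∧
          affEval u.2 u.1 x0 = 0}
  have hsum : ∀ x, affEval (∑ u ∈ t, u).2 (∑ u ∈ t, u).1 x = ∑ u ∈ t, affEval u.2 u.1 x := by
    intro x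
    simp only [← pairB_one, map_sum, LinearMap.sum_apply]
  refine ⟨∑ u ∈ t, u, fun x hx => ?_, ?_, fun x hx h0 u hu hu0 => ?_⟩
  · rw [hsum]
    exact Finset.sum_nonneg fun u hu => (ht hu).1 x hx
  · rw [hsum]
    exact Finset.sum_eq_zero fun u hu => (ht hu).2
  · rw [hsum, Finset.sum_eq_zero_iff_of_nonneg (fun u hu => (ht hu).1 x hx)] at h0
    have := hs (pairB.flip (1, x)) (fun u hu => by
      rw [LinearMap.flip_apply, pairB_one]; exact h0 u hu) u ⟨hu, hu0⟩
    rwa [LinearMap.flip_apply, pairB_one] at this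

/-- a polynomial nonnegative on [0,1] and zero at 0 has nonnegative linear coefficient -/
lemma aux_deriv (g : Polynomial ℝ) (h0 : g.coeff 0 = 0) (h : ∀ s, 0 < s → s ≤ 1 → 0 ≤ g.eval s) :
    0 ≤ g.coeff 1 := by
  have e : ∀ s, g.eval s = g.divX.eval s * s := by
    intro s
    conv_lhs => rw [← Polynomial.divX_mul_X_add g]
    simp [h0]
  have e1 : g.coeff 1 = g.divX.eval 0 := by
    rw [← Polynomial.coeff_zero_eq_eval_zero, Polynomial.coeff_divX]
  rw [e1]
  have ht : Filter.Tendsto (fun s => g.divX.eval s) (nhdsWithin 0 (Set.Ioi 0))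
      (nhds (g.divX.eval 0)) := (g.divX.continuous.tendsto 0).mono_left nhdsWithin_le_nhds
  refine ge_of_tendsto ht ?_
  filter_upwards [Ioc_mem_nhdsGT (zero_lt_one (α := ℝ))] with s hs
  have := h s hs.1 hs.2
  rw [e] at this
  exact nonneg_of_mul_nonneg_left this hs.1

lemma aux_core {n m : ℕ} (p : Fin m → MvPolynomial (Fin n) ℝ) (d : ℕ) (x0 v : Fin n → ℝ)
    (hseg : ∀ s : ℝ, 0 ≤ s → s ≤ 1 → x0 + s • v ∈ basicClosedSet p)
    (hder : ∀ i, MvPolynomial.eval x0 (p i) = 0 → (lineHom x0 v (p i)).coeff 1 = 0) :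
    ∃ t : ℝ, 0 < t ∧ x0 - t • v ∈ lasserre p d := by
  set P : Fin (m+1) → MvPolynomial (Fin n) ℝ := Fin.cons 1 p with hP
  have hsegP : ∀ s : ℝ, 0 ≤ s → s ≤ 1 → ∀ i, 0 ≤ (lineHom x0 v (P i)).eval s := by
    intro s h0 h1 i
    rw [lineHom_eval]
    refine Fin.cases ?_ (fun i => ?_) i
    · simp [hP]
    · simpa [hP] using hseg s h0 h1 i
  have hderP : ∀ i, (lineHom x0 v (P i)).coeff 0 = 0 → (lineHom x0 v (P i)).coeff 1 = 0 := by
    intro i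
    rw [lineHom_coeff_zero]
    refine Fin.cases ?_ (fun i => ?_) i
    · simp [hP]
    · simpa [hP] using hder i
  have hc0 : ∀ i, 0 ≤ (lineHom x0 v (P i)).coeff 0 := fun i => by
    rw [Polynomial.coeff_zero_eq_eval_zero]; exact hsegP 0 le_rfl zero_le_one i
  -- choose delta
  have hδ : ∃ δ : ℝ, 0 < δ ∧ δ ≤ 1 ∧ ∀ s, 0 < s → s ≤ δ → ∀ i,
      (lineHom x0 v (P i)).coeff 0 / 2 ≤ (lineHom x0 v (P i)).eval s := by
    have : ∀ᶠ s in nhdsWithin (0:ℝ) (Set.Ioi 0), s ≤ 1 ∧ ∀ i,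
      (lineHom x0 v (P i)).coeff 0 / 2 ≤ (lineHom x0 v (P i)).eval s := by
      refine Filter.Eventually.and ?_ (Filter.eventually_all.2 fun i => ?_)
      · filter_upwards [Ioc_mem_nhdsGT (zero_lt_one (α := ℝ))] with s hs using hs.2
      · rcases (hc0 i).eq_or_lt with h | h
        · filter_upwards [Ioc_mem_nhdsGT (zero_lt_one (α := ℝ))] with s hs
          rw [← h, zero_div]
          exact hsegP s hs.1.le hs.2 i
        · have ht := ((lineHom x0 v (P i)).continuous.tendsto 0).mono_left
            (nhdsWithin_le_nhds (s := Set.Ioi 0))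
          rw [← Polynomial.coeff_zero_eq_eval_zero] at ht
          exact (ht.eventually (lt_mem_nhds (half_lt_self h))).mono fun s hs => hs.le
    obtain ⟨δ, hδ, hh⟩ := mem_nhdsGT_iff_exists_Ioc_subset.1 this
    exact ⟨δ, hδ, (hh ⟨hδ, le_rfl⟩).1, fun s h0 h1 => (hh ⟨h0, h1⟩).2⟩
  obtain ⟨δ, hδ0, hδ1, hδ⟩ := hδ
  set nd : ℕ → ℝ := fun k => δ / (k + 1) with hnd
  have hnd0 : ∀ k, 0 < nd k := fun k => by positivity
  have hndδ : ∀ k, nd k ≤ δ := fun k => div_le_self hδ0.le (by simp)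
  have hinj : Function.Injective nd := by
    intro a b hab
    simp only [hnd] at hab
    have : (a:ℝ) + 1 = b + 1 := by
      field_simp at hab
      linarith
    exact_mod_cast add_right_cancel this
  obtain ⟨K, hK0, hK⟩ := aux_nodes d nd hinj
  set N : ℝ := ∑ k ∈ Finset.range (d+1), nd k with hN
  -- choose t
  have ht : ∃ t : ℝ, 0 < t ∧ 2 * t ≤ 1 ∧ t * (4 * K * N) < 1 ∧ ∀ i,
      0 < (lineHom x0 v (P i)).coeff 0 →
      t * (lineHom x0 v (P i)).coeff 1 ≤ (lineHom x0 v (P i)).coeff 0 / 2 := by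
    have key : ∀ a b : ℝ, 0 < b → ∀ᶠ t in nhdsWithin (0:ℝ) (Set.Ioi 0), t * a < b := by
      intro a b hb
      have : Filter.Tendsto (fun t : ℝ => t * a) (nhdsWithin (0:ℝ) (Set.Ioi 0)) (nhds 0) := by
        have h : Continuous (fun t : ℝ => t * a) := by fun_prop
        simpa using (h.tendsto 0).mono_left nhdsWithin_le_nhds
      exact this.eventually (gt_mem_nhds hb)
    have : ∀ᶠ t in nhdsWithin (0:ℝ) (Set.Ioi 0), 0 < t ∧ t * 2 < 1 ∧ t * (4 * K * N) < 1 ∧ ∀ i,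
      0 < (lineHom x0 v (P i)).coeff 0 →
      t * (lineHom x0 v (P i)).coeff 1 < (lineHom x0 v (P i)).coeff 0 / 2 := by
      refine (eventually_mem_nhdsWithin (s := Set.Ioi (0:ℝ))).and ((key _ _ one_pos).and ((key _ _ one_pos).and
        (Filter.eventually_all.2 fun i => ?_)))
      by_cases h : 0 < (lineHom x0 v (P i)).coeff 0
      · exact (key _ _ (half_pos h)).mono fun _ h _ => h
      · exact Filter.Eventually.of_forall fun _ h' => absurd h' h
    obtain ⟨t, h1, h2, h3, h4⟩ := this.exists
    exact ⟨t, h1, by linarith, h3, fun i hi => (h4 i hi).le⟩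
  obtain ⟨t, ht0, ht2, htN, ht⟩ := ht
  -- the functional
  let M : Polynomial ℝ →ₗ[ℝ] ℝ := Polynomial.lcoeff ℝ 0 - t • Polynomial.lcoeff ℝ 1
    + (4 * K * t ^ 2) • ∑ k ∈ Finset.range (d+1), Polynomial.leval (nd k)
  have hM : ∀ g, M g = g.coeff 0 - t * g.coeff 1
      + 4 * K * t ^ 2 * ∑ k ∈ Finset.range (d+1), g.eval (nd k) := by
    intro g
    simp [M, LinearMap.sum_apply]
  set Z : ℝ := 1 + 4 * K * t ^ 2 * (d + 1) with hZ
  have hZ0 : 0 < Z := by positivity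
  have hM1 : M 1 = Z := by
    rw [hM]
    simp [Polynomial.coeff_one, hZ]
  refine ⟨(t - 4 * K * t ^ 2 * N) / Z, div_pos ?_ hZ0, ?_⟩
  · nlinarith
  refine ⟨Z⁻¹ • (M ∘ₗ (lineHom x0 v).toLinearMap), ?_, ?_, ?_⟩
  · rintro q ⟨σ, hσ, hdeg, rfl⟩
    rw [LinearMap.smul_apply, map_sum, smul_eq_mul]
    refine mul_nonneg (by positivity) (Finset.sum_nonneg fun i _ => ?_)
    have hdi := hdeg i
    change (σ i * P i).totalDegree ≤ d at hdi
    change 0 ≤ M (lineHom x0 v (σ i * P i))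
    by_cases hPi : P i = 0
    · simp [hPi]
    by_cases hσi : σ i = 0
    · simp [hσi]
    rw [MvPolynomial.totalDegree_mul_of_isDomain hσi hPi] at hdi
    have hdσ := (lineHom_natDegree x0 v (σ i)).trans (le_trans (Nat.le_add_right _ _) hdi)
    rw [map_mul]
    have hspos : ∀ s, 0 ≤ (lineHom x0 v (σ i)).eval s := fun s => by
      rw [lineHom_eval]; exact (hσ i).eval_nonneg _
    have hKs := hK _ hdσ hspos (2 * t) (by positivity) ht2
    have hb := hδ
    have hs0 : 0 ≤ (lineHom x0 v (σ i)).coeff 0 := by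
      rw [Polynomial.coeff_zero_eq_eval_zero]; exact hspos 0
    have htt := ht i
    have hdd := hderP i
    have hcc := hc0 i
    have hsum : (lineHom x0 v (P i)).coeff 0 / 2 *
        ∑ k ∈ Finset.range (d+1), (lineHom x0 v (σ i)).eval (nd k) ≤
        ∑ k ∈ Finset.range (d+1), (lineHom x0 v (σ i) * lineHom x0 v (P i)).eval (nd k) := by
      rw [Finset.mul_sum]
      refine Finset.sum_le_sum fun k _ => ?_
      rw [Polynomial.eval_mul, mul_comm]
      exact mul_le_mul_of_nonneg_left (hδ _ (hnd0 k) (hndδ k) i) (hspos _)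
    have hsum0 : 0 ≤ ∑ k ∈ Finset.range (d+1), (lineHom x0 v (σ i)).eval (nd k) :=
      Finset.sum_nonneg fun k _ => hspos _
    rw [hM, Polynomial.mul_coeff_zero, Polynomial.mul_coeff_one]
    generalize (∑ k ∈ Finset.range (d+1), (lineHom x0 v (σ i) * lineHom x0 v (P i)).eval (nd k)) = E at *
    generalize (∑ k ∈ Finset.range (d+1), (lineHom x0 v (σ i)).eval (nd k)) = Eσ at *
    generalize (lineHom x0 v (σ i)).coeff 0 = a0 at *
    generalize (lineHom x0 v (σ i)).coeff 1 = a1 at *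
    generalize (lineHom x0 v (P i)).coeff 0 = b0 at *
    generalize (lineHom x0 v (P i)).coeff 1 = b1 at *
    have hKt : 0 ≤ 4 * K * t ^ 2 := by positivity
    have hE := mul_le_mul_of_nonneg_left hsum hKt
    rcases hcc.eq_or_lt with h | h
    · subst h
      rw [hdd rfl]
      simp only [mul_zero, zero_div, zero_mul] at hE ⊢
      linarith
    · have h1 := mul_nonneg hs0 (sub_nonneg.2 (htt h))
      have h2 := mul_nonneg (half_pos h).le hKs
      nlinarith
  · change Z⁻¹ * M (lineHom x0 v 1) = 1
    rw [map_one, hM1, inv_mul_cancel₀ hZ0.ne']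
  · intro i
    change _ = Z⁻¹ * M (lineHom x0 v (MvPolynomial.X i))
    have hX : lineHom x0 v (MvPolynomial.X i) =
      Polynomial.C (x0 i) + Polynomial.C (v i) * Polynomial.X := by simp [lineHom]
    have hMX : M Polynomial.X = - t + 4 * K * t ^ 2 * N := by
      rw [hM]; simp [hN]
    have : Polynomial.C (x0 i) + Polynomial.C (v i) * Polynomial.X
        = x0 i • (1 : Polynomial ℝ) + v i • Polynomial.X := by
      rw [Polynomial.smul_eq_C_mul, Polynomial.smul_eq_C_mul, mul_one]
    rw [hX, this, map_add, map_smul, map_smul, hM1, hMX]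
    simp only [Pi.sub_apply, Pi.smul_apply, smul_eq_mul]
    field_simp
    ring

/-- If `S = S(p₁,…,p_m)` is convex with non-empty interior and some
Lasserre relaxation `S(p)_d` (`d ≥ 1`) of `S` is exact, i.e. `S(p)_d = S`, then every face
of `S` is exposed. -/
theorem lasserreExact_implies_facesExposed {n m : ℕ}
    (p : Fin m → MvPolynomial (Fin n) ℝ) (S : Set (Fin n → ℝ))
    (hS : S = basicClosedSet p) (hconv : Convex ℝ S) (hint : (interior S).Nonempty)
    (hexact : ∃ d : ℕ, 1 ≤ d ∧ lasserre p d = S) :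
    ∀ F : Set (Fin n → ℝ), IsFaceOf S F → IsExposedFaceOf S F := by
  intro F hF
  obtain ⟨d, -, hd⟩ := hexact
  by_cases hFS : F = S
  · exact Or.inl hFS
  right
  obtain ⟨x0, hx0, hrel⟩ := aux_relint S F hF
  obtain ⟨w, hw, hw0, hmax⟩ := aux_maxfun S x0
  have hFw := hrel w hw hw0
  obtain ⟨hne, hFc, hFsub, hface⟩ := hF
  have hsub : F ⊆ {x | affEval w.2 w.1 x = 0} ∩ S := fun x hx => ⟨hFw x hx, hFsub hx⟩
  by_cases heq : {x | affEval w.2 w.1 x = 0} ∩ S = F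
  · refine ⟨w.2, w.1, fun h => hFS ?_, hw, ⟨x0, hsub hx0⟩, heq⟩
    rw [← heq, h]
    simp
  exfalso
  obtain ⟨x1, ⟨hx1w, hx1S⟩, hx1F⟩ : ∃ x1, x1 ∈ {x | affEval w.2 w.1 x = 0} ∩ S ∧ x1 ∉ F := by
    by_contra hcon
    push Not at hcon
    exact heq (Set.Subset.antisymm hcon hsub)
  have hall := hmax x1 hx1S hx1w
  have hx0S := hFsub hx0
  have hsegS : ∀ x ∈ S, ∀ s : ℝ, 0 ≤ s → s ≤ 1 → x0 + s • (x - x0) ∈ S := fun x hx s h0 h1 =>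
    hconv.add_smul_sub_mem hx0S hx ⟨h0, h1⟩
  have hder : ∀ i, MvPolynomial.eval x0 (p i) = 0 →
      (lineHom x0 (x1 - x0) (p i)).coeff 1 = 0 := by
    intro i hi
    let u : ℝ × (Fin n → ℝ) := (- ∑ j, MvPolynomial.eval x0 (MvPolynomial.pderiv j (p i)) * x0 j,
      fun j => MvPolynomial.eval x0 (MvPolynomial.pderiv j (p i)))
    have hu : ∀ x, affEval u.2 u.1 x = (lineHom x0 (x - x0) (p i)).coeff 1 := by
      intro x
      rw [lineHom_coeff_one]
      simp only [affEval, u, Pi.sub_apply, mul_sub, Finset.sum_sub_distrib]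
      ring
    rw [← hu]
    refine hall u (fun x hx => ?_) ?_
    · rw [hu]
      refine aux_deriv _ (by rw [lineHom_coeff_zero, hi]) fun s h0 h1 => ?_
      rw [lineHom_eval]
      have := hsegS x hx s h0.le h1
      rw [hS] at this
      exact this i
    · rw [hu, lineHom_coeff_one]
      simp
  obtain ⟨t, ht, hmem⟩ := aux_core p d x0 (x1 - x0)
    (fun s h0 h1 => hS ▸ hsegS x1 hx1S s h0 h1) hder
  rw [hd] at hmem
  refine hx1F (hface _ hmem x1 hx1S (1 / (1 + t)) (by positivity)
    (by rw [div_lt_one (by positivity)]; linarith) ?_).2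
  convert hx0 using 1
  ext j
  simp only [Pi.add_apply, Pi.smul_apply, Pi.sub_apply, smul_eq_mul]
  field_simp
  ring
end

section
/- Let p = (p_1,…,p_m) be real polynomials in n variables such that S = S(p_1,…,p_m) is convex with non-empty interior. Suppose there exists d ≥ 1 such that every affine-linear polynomial ℓ with ℓ ≥ 0 on S is contained in QM(p)_d. Then every face of S is exposed. -/
open MvPolynomial

lemma eq_zero_of_open {n : ℕ} (U : Set (Fin n → ℝ)) (hU : IsOpen U) (hne : U.Nonempty)
    (f : MvPolynomial (Fin n) ℝ) (hf : ∀ x ∈ U, eval x f = 0) : f = 0 := by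
  obtain ⟨u, hu⟩ := hne
  obtain ⟨ε, hε, hb⟩ := Metric.isOpen_iff.1 hU u hu
  refine MvPolynomial.funext_set (fun i => Metric.ball (u i) ε) (fun i => ?_) (fun x hx => ?_)
  · rw [Real.ball_eq_Ioo]
    exact Set.Ioo_infinite (by linarith)
  · rw [map_zero]
    apply hf x (hb _)
    rw [ball_pi _ hε]
    exact hx

lemma coeff_bdd {n : ℕ} (D : ℕ) (U : Set (Fin n → ℝ))
    (hU : ∀ f : MvPolynomial (Fin n) ℝ, (∀ x ∈ U, eval x f = 0) → f = 0)
    (f : ℕ → MvPolynomial (Fin n) ℝ) (hdeg : ∀ k, (f k).totalDegree ≤ D)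
    (hb : ∀ x ∈ U, ∃ B, ∀ k, |eval x (f k)| ≤ B) (s : Fin n →₀ ℕ) :
    ∃ B, ∀ k, |coeff s (f k)| ≤ B := by
  let V := restrictTotalDegree (Fin n) ℝ D
  let ev : (Fin n → ℝ) → Module.Dual ℝ V := fun x =>
    (MvPolynomial.aeval x : MvPolynomial (Fin n) ℝ →ₐ[ℝ] ℝ).toLinearMap.comp V.subtype
  have hspan : Submodule.span ℝ (ev '' U) = ⊤ := by
    apply Submodule.span_eq_top_of_ne_zero
    intro z hz
    by_contra hcon
    push Not at hcon
    apply hz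
    apply Subtype.ext
    apply hU
    intro x hx
    have := hcon (ev x) ⟨x, hx, rfl⟩
    simpa [ev, MvPolynomial.aeval_eq_eval] using this
  let fV : ℕ → V := fun k => ⟨f k, (mem_restrictTotalDegree _ _ _).2 (hdeg k)⟩
  have key : ∀ g ∈ Submodule.span ℝ (ev '' U), ∃ B, ∀ k, |g (fV k)| ≤ B := by
    intro g hg
    induction hg using Submodule.span_induction with
    | mem g hg =>
      obtain ⟨x, hx, rfl⟩ := hg
      obtain ⟨B, hB⟩ := hb x hx
      exact ⟨B, fun k => by simpa [ev, fV, MvPolynomial.aeval_eq_eval] using hB k⟩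
    | zero => exact ⟨0, fun k => by simp⟩
    | add g h _ _ h1 h2 =>
      obtain ⟨B, hB⟩ := h1
      obtain ⟨B', hB'⟩ := h2
      exact ⟨B + B', fun k => (abs_add_le _ _).trans (add_le_add (hB k) (hB' k))⟩
    | smul c g _ h1 =>
      obtain ⟨B, hB⟩ := h1
      refine ⟨|c| * B, fun k => ?_⟩
      simp only [LinearMap.smul_apply, smul_eq_mul, abs_mul]
      exact mul_le_mul_of_nonneg_left (hB k) (abs_nonneg _)
  exact key ((MvPolynomial.lcoeff ℝ s).comp V.subtype) (by rw [hspan]; trivial)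

lemma lim_exists (𝓤 : Ultrafilter ℕ) (f : ℕ → ℝ) (B : ℝ) (hB : ∀ k, |f k| ≤ B) :
    ∃ l, Filter.Tendsto f 𝓤 (nhds l) := by
  have hc : IsCompact (Set.Icc (-B) B) := isCompact_Icc
  obtain ⟨l, _, hl⟩ := hc.ultrafilter_le_nhds (𝓤.map f) (by
    rw [Filter.le_principal_iff]
    exact Filter.mem_map.2 (Filter.univ_mem' (fun k => abs_le.1 (hB k))))
  exact ⟨l, hl⟩

lemma poly_lim {n : ℕ} (𝓤 : Ultrafilter ℕ) (D : ℕ) (U : Set (Fin n → ℝ))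
    (hU : ∀ f : MvPolynomial (Fin n) ℝ, (∀ x ∈ U, eval x f = 0) → f = 0)
    (f : ℕ → MvPolynomial (Fin n) ℝ) (hdeg : ∀ k, (f k).totalDegree ≤ D)
    (hb : ∀ x ∈ U, ∃ B, ∀ k, |eval x (f k)| ≤ B) :
    ∃ g : MvPolynomial (Fin n) ℝ, ∀ (x : ℕ → Fin n → ℝ) (x0 : Fin n → ℝ),
      Filter.Tendsto x 𝓤 (nhds x0) →
      Filter.Tendsto (fun k => eval (x k) (f k)) 𝓤 (nhds (eval x0 g)) := by
  have h1 : ∀ s, ∃ l, Filter.Tendsto (fun k => coeff s (f k)) 𝓤 (nhds l) := fun s => by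
    obtain ⟨B, hB⟩ := coeff_bdd D U hU f hdeg hb s
    exact lim_exists 𝓤 _ B hB
  choose l hl using h1
  let T : Finset (Fin n →₀ ℕ) := Finset.Iic (Finsupp.equivFunOnFinite.symm fun _ => D)
  have hT : ∀ k, (f k).support ⊆ T := by
    intro k s hs
    simp only [T, Finset.mem_Iic]
    intro i
    exact (monomial_le_degreeOf i hs).trans ((degreeOf_le_totalDegree _ _).trans (hdeg k))
  refine ⟨∑ s ∈ T, monomial s (l s), fun x x0 hx => ?_⟩
  have he : ∀ k, eval (x k) (f k) = ∑ s ∈ T, coeff s (f k) * ∏ i, x k i ^ s i := by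
    intro k
    rw [eval_eq']
    apply Finset.sum_subset (hT k)
    intro s _ hs
    rw [notMem_support_iff.1 hs, zero_mul]
  simp only [he, map_sum, eval_monomial]
  refine tendsto_finsetSum _ fun s _ => (hl s).mul ?_
  rw [Finsupp.prod_fintype _ _ (by simp)]
  refine tendsto_finsetProd _ fun i _ => ?_
  exact ((tendsto_pi_nhds.1 hx) i).pow _

lemma biv {n : ℕ} (q : MvPolynomial (Fin n) ℝ) (x0 v w : Fin n → ℝ) :
    ∃ P : Polynomial (Polynomial ℝ), ∀ a b : ℝ,
      eval (x0 + a • v + b • w) q = P.evalEval a b := by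
  refine ⟨MvPolynomial.eval₂ (Polynomial.C.comp Polynomial.C) (fun j =>
    Polynomial.C (Polynomial.C (x0 j) + Polynomial.X * Polynomial.C (v j)) +
      Polynomial.X * Polynomial.C (Polynomial.C (w j))) q, fun a b => ?_⟩
  induction q using MvPolynomial.induction_on with
  | C r => simp [Polynomial.evalEval]
  | add p q hp hq => simp [hp, hq]
  | mul_X p i hp =>
    simp [hp, Polynomial.evalEval]
    left; ring

lemma evalEval_zero_right (P : Polynomial (Polynomial ℝ)) (a : ℝ) :
    P.evalEval a 0 = (P.coeff 0).eval a := by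
  simp [Polynomial.evalEval, Polynomial.coeff_zero_eq_eval_zero]

lemma evalEval_zero_left (P : Polynomial (Polynomial ℝ)) (b : ℝ) :
    P.evalEval 0 b = (P.map (Polynomial.evalRingHom 0)).eval b := by
  rw [Polynomial.map_evalRingHom_eval]

lemma evalEval_X_mul (Q : Polynomial (Polynomial ℝ)) (a b : ℝ) :
    (Polynomial.X * Q).evalEval a b = b * Q.evalEval a b := by
  simp [Polynomial.evalEval]

lemma key_biv {ι : Type*} [Fintype ι] (σ P : ι → Polynomial (Polynomial ℝ)) (L : ℝ) (hL : 0 < L)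
    (hσ : ∀ i a b, 0 ≤ (σ i).evalEval a b)
    (h0 : ∀ i, ∀ a ∈ Set.Icc (0 : ℝ) 1, (σ i).evalEval a 0 * (P i).evalEval a 0 = 0)
    (hsum : ∀ b : ℝ, ∑ i, (σ i).evalEval 0 b * (P i).evalEval 0 b = b * L) :
    ∃ i, ∃ Q : Polynomial (Polynomial ℝ), P i = Polynomial.X * Q ∧
      0 < (σ i).evalEval 0 0 ∧ 0 < Q.evalEval 0 0 := by
  have hK : ∀ i, ∃ K : Polynomial ℝ,
      (∀ b, (σ i).evalEval 0 b * (P i).evalEval 0 b = b * K.eval b) ∧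
      (0 < K.eval 0 → ∃ Q : Polynomial (Polynomial ℝ), P i = Polynomial.X * Q ∧
      0 < (σ i).evalEval 0 0 ∧ 0 < Q.evalEval 0 0) := by
    intro i
    have hz : (σ i).coeff 0 * (P i).coeff 0 = 0 := by
      apply Polynomial.eq_zero_of_infinite_isRoot
      refine (Set.Icc_infinite (zero_lt_one (α := ℝ))).mono fun a ha => ?_
      have := h0 i a ha
      rw [evalEval_zero_right, evalEval_zero_right] at this
      simpa [Polynomial.IsRoot] using this
    rcases mul_eq_zero.1 hz with hs | hp
    · obtain ⟨R, hR⟩ := Polynomial.X_dvd_iff.2 hs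
      have hR0 : R.evalEval 0 0 = 0 := by
        have hpos : ∀ b : ℝ, 0 ≤ b * (R.map (Polynomial.evalRingHom 0)).eval b := by
          intro b
          have := hσ i 0 b
          rwa [hR, evalEval_X_mul, evalEval_zero_left] at this
        rw [evalEval_zero_left]
        set g := R.map (Polynomial.evalRingHom (0 : ℝ))
        have hc : Filter.Tendsto (fun b => g.eval b) (nhds 0) (nhds (g.eval 0)) :=
          g.continuous.tendsto 0
        apply le_antisymm
        · refine le_of_tendsto (hc.mono_left (nhdsWithin_le_nhds (s := Set.Iio 0))) ?_
          filter_upwards [self_mem_nhdsWithin] with b hb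
          have := hpos b
          have hb' : b < 0 := hb
          by_contra hcon
          push Not at hcon
          nlinarith
        · refine ge_of_tendsto (hc.mono_left (nhdsWithin_le_nhds (s := Set.Ioi 0))) ?_
          filter_upwards [self_mem_nhdsWithin] with b hb
          have := hpos b
          have hb' : 0 < b := hb
          by_contra hcon
          push Not at hcon
          nlinarith
      refine ⟨R.map (Polynomial.evalRingHom 0) * (P i).map (Polynomial.evalRingHom 0),
        fun b => ?_, fun h => ?_⟩
      · rw [hR, evalEval_X_mul, Polynomial.eval_mul, ← evalEval_zero_left, ← evalEval_zero_left,
          mul_assoc]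
      · rw [Polynomial.eval_mul, ← evalEval_zero_left, ← evalEval_zero_left, hR0, zero_mul] at h
        exact absurd h (lt_irrefl _)
    · obtain ⟨Q, hQ⟩ := Polynomial.X_dvd_iff.2 hp
      refine ⟨(σ i).map (Polynomial.evalRingHom 0) * Q.map (Polynomial.evalRingHom 0),
        fun b => ?_, fun h => ⟨Q, hQ, ?_⟩⟩
      · rw [hQ, evalEval_X_mul, Polynomial.eval_mul, ← evalEval_zero_left, ← evalEval_zero_left]
        ring
      · rw [Polynomial.eval_mul, ← evalEval_zero_left, ← evalEval_zero_left] at h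
        have := hσ i 0 0
        exact (pos_and_pos_or_neg_and_neg_of_mul_pos h).resolve_right
          (fun h' => absurd h'.1 (not_lt.2 this))
  choose K hK1 hK2 using hK
  have hsumK : ∑ i, K i = Polynomial.C L := by
    rw [← sub_eq_zero]
    apply Polynomial.eq_zero_of_infinite_isRoot
    refine (Set.Icc_infinite (a := (1 : ℝ)) (b := 2) (by norm_num)).mono fun b hb => ?_
    have h1 := hsum b
    simp only [hK1] at h1
    rw [← Finset.mul_sum] at h1
    have hb' : b ≠ 0 := by have := hb.1; linarith
    have h2 := mul_left_cancel₀ hb' h1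
    simp [Polynomial.IsRoot, Polynomial.eval_finsetSum, h2]
  have h3 : 0 < ∑ i, (K i).eval 0 := by
    rw [← Polynomial.eval_finsetSum, hsumK, Polynomial.eval_C]; exact hL
  obtain ⟨i, _, hi⟩ := Finset.exists_lt_of_sum_lt (s := Finset.univ) (f := fun _ : ι => (0:ℝ))
    (by simpa using h3)
  exact ⟨i, hK2 i hi⟩

lemma boundary_pt {n : ℕ} (S : Set (Fin n → ℝ)) (hcl : IsClosed S) (hconv : Convex ℝ S)
    (x0 v u : Fin n → ℝ) (hx0 : x0 ∈ S) (hu : u ∈ interior S)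
    (hz : ∀ ε : ℝ, 0 < ε → x0 - ε • v ∉ S) (ε : ℝ) (hε : 0 < ε) (hε1 : ε ≤ 1) :
    ∃ a b : ℝ, -ε ≤ a ∧ a ≤ 0 ∧ 0 < b ∧ b ≤ ε ∧ x0 + a • v + b • (u - x0) ∈ S ∧
      x0 + a • v + b • (u - x0) ∉ interior S := by
  have hc : x0 + ε • (u - x0) ∈ interior S :=
    hconv.add_smul_sub_mem_interior hx0 hu ⟨hε, hε1⟩
  have hzε := hz ε hε
  have hpre : IsPreconnected (segment ℝ (x0 - ε • v) (x0 + ε • (u - x0))) :=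
    (convex_segment _ _).isPreconnected
  have hex : ∃ t ∈ segment ℝ (x0 - ε • v) (x0 + ε • (u - x0)), t ∈ S ∧ t ∉ interior S := by
    by_contra hcon
    push Not at hcon
    have hsub : segment ℝ (x0 - ε • v) (x0 + ε • (u - x0)) ⊆ interior S ∪ Sᶜ := by
      intro t ht
      by_cases h : t ∈ S
      · exact Or.inl (hcon t ht h)
      · exact Or.inr h
    have hd : Disjoint (interior S) Sᶜ :=
      Set.disjoint_left.2 fun t ht h => h (interior_subset ht)
    rcases hpre.subset_or_subset isOpen_interior hcl.isOpen_compl hd hsub with h | h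
    · exact hzε (interior_subset (h (left_mem_segment _ _ _)))
    · exact h (right_mem_segment _ _ _) (interior_subset hc)
  obtain ⟨t, ⟨r, s, hr, hs, hrs, rfl⟩, htS, htI⟩ := hex
  have hE : r • (x0 - ε • v) + s • (x0 + ε • (u - x0)) =
      x0 + (-(r * ε)) • v + (s * ε) • (u - x0) := by
    have : r = 1 - s := by linarith
    subst this
    ext j
    simp
    ring
  have hs0 : s ≠ 0 := by
    rintro rfl
    apply hzε
    have : r = 1 := by linarith
    subst this
    simpa using htS
  have hs' : 0 < s := lt_of_le_of_ne hs (Ne.symm hs0)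
  rw [hE] at htS htI
  exact ⟨-(r * ε), s * ε, by nlinarith, by nlinarith [mul_nonneg hr hε.le], by positivity,
    by nlinarith, htS, htI⟩

lemma affEval_combo {n : ℕ} (α : Fin n → ℝ) (c : ℝ) (x0 v : Fin n → ℝ) (t : ℝ) :
    affEval α c (x0 + t • v) = affEval α c x0 + t * ∑ i, α i * v i := by
  simp only [affEval, Pi.add_apply, Pi.smul_apply, smul_eq_mul, mul_add, Finset.sum_add_distrib,
    Finset.mul_sum]
  rw [add_assoc]
  congr 2
  exact Finset.sum_congr rfl fun i _ => by ring

lemma affEval_sub {n : ℕ} (α : Fin n → ℝ) (c : ℝ) (x0 v : Fin n → ℝ) :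
    affEval α c v - affEval α c x0 = ∑ i, α i * (v - x0) i := by
  simp only [affEval, Pi.sub_apply, mul_sub, Finset.sum_sub_distrib]
  ring

lemma support_fn {n : ℕ} (S : Set (Fin n → ℝ)) (hconv : Convex ℝ S)
    (hint : (interior S).Nonempty) (x : Fin n → ℝ) (hx : x ∉ interior S) :
    ∃ (α : Fin n → ℝ) (c : ℝ), ‖α‖ = 1 ∧ (∀ y ∈ S, 0 ≤ affEval α c y) ∧ affEval α c x = 0 := by
  obtain ⟨f, hf⟩ := geometric_hahn_banach_open_point hconv.interior isOpen_interior hx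
  have hf' : ∀ y ∈ S, f y ≤ f x := by
    intro y hy
    have hy' : y ∈ closure (interior S) := by
      rw [hconv.closure_interior_eq_closure_of_nonempty_interior hint]
      exact subset_closure hy
    exact closure_minimal (fun z hz => (hf z hz).le) (isClosed_le f.continuous continuous_const) hy'
  let β : Fin n → ℝ := fun i => -f (Pi.single i 1)
  have hβ : ∀ y : Fin n → ℝ, ∑ i, β i * y i = -f y := by
    intro y
    conv_rhs => rw [pi_eq_sum_univ' y, map_sum]
    simp only [map_smul, smul_eq_mul, β, neg_mul, Finset.sum_neg_distrib]
    congr 1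
    refine Finset.sum_congr rfl fun i _ => ?_
    rw [mul_comm]
  have hβ0 : β ≠ 0 := by
    intro h0
    obtain ⟨u, hu⟩ := hint
    have h1 := hf u hu
    have h2 := hβ u
    have h3 := hβ x
    simp only [h0, Pi.zero_apply, zero_mul, Finset.sum_const_zero] at h2 h3
    linarith
  have hn : 0 < ‖β‖ := norm_pos_iff.2 hβ0
  have hE : ∀ y, affEval (‖β‖⁻¹ • β) (‖β‖⁻¹ * f x) y = ‖β‖⁻¹ * (f x - f y) := by
    intro y
    have := hβ y
    simp only [affEval, Pi.smul_apply, smul_eq_mul, mul_assoc]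
    rw [← Finset.mul_sum, this]
    ring
  refine ⟨‖β‖⁻¹ • β, ‖β‖⁻¹ * f x, ?_, fun y hy => ?_, ?_⟩
  · rw [norm_smul, norm_inv, norm_norm, inv_mul_cancel₀ hn.ne']
  · rw [hE]
    have := hf' y hy
    exact mul_nonneg (inv_nonneg.2 hn.le) (by linarith)
  · rw [hE]; simp

lemma pos_interior {n : ℕ} (S : Set (Fin n → ℝ)) (u : Fin n → ℝ) (hu : u ∈ interior S)
    (α : Fin n → ℝ) (c : ℝ) (hα : α ≠ 0) (h : ∀ y ∈ S, 0 ≤ affEval α c y) :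
    0 < affEval α c u := by
  have hcont : Filter.Tendsto (fun t : ℝ => u + t • α) (nhds 0) (nhds u) := by
    have : Continuous (fun t : ℝ => u + t • α) := by fun_prop
    simpa using this.tendsto 0
  have hev := hcont.eventually (isOpen_interior.mem_nhds hu)
  obtain ⟨ε, hε, hb⟩ := Metric.eventually_nhds_iff.1 hev
  have h1 := @hb (-(ε / 2)) (by rw [Real.dist_eq, sub_zero, abs_neg, abs_of_pos] <;> linarith)
  have h2 := h _ (interior_subset h1)
  rw [affEval_combo] at h2
  have hpos : 0 < ∑ i, α i * α i := by
    obtain ⟨i, hi⟩ := Function.ne_iff.1 hα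
    exact Finset.sum_pos' (fun i _ => mul_self_nonneg _) ⟨i, Finset.mem_univ _, mul_self_pos.2 hi⟩
  nlinarith

lemma QM_repr {n m : ℕ} (p : Fin m → MvPolynomial (Fin n) ℝ) (d : ℕ)
    (l : MvPolynomial (Fin n) ℝ) (hl : l ∈ QM p d)
    (q : Fin (m + 1) → MvPolynomial (Fin n) ℝ) (hq : q = Fin.cons 1 p) :
    ∃ σ : Fin (m + 1) → MvPolynomial (Fin n) ℝ, (∀ i x, 0 ≤ eval x (σ i)) ∧
      (∀ i, (σ i).totalDegree ≤ d) ∧ (∀ i, q i = 0 → σ i = 0) ∧ l = ∑ i, σ i * q i := by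
  classical
  subst hq
  obtain ⟨σ, h1, h2, h3⟩ := hl
  set q : Fin (m + 1) → MvPolynomial (Fin n) ℝ := Fin.cons 1 p
  refine ⟨fun i => if q i = 0 then 0 else σ i, fun i x => ?_, fun i => ?_, fun i hi => by simp [hi],
    ?_⟩
  · by_cases hi : q i = 0
    · simp [hi]
    · obtain ⟨r, f, hf⟩ := h1 i
      simp only [hi, if_false, hf, map_sum, map_pow]
      exact Finset.sum_nonneg fun j _ => sq_nonneg _
  · by_cases hi : q i = 0
    · simp [hi]
    · simp only [hi, if_false]
      by_cases hs : σ i = 0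
      · simp [hs]
      · have := h2 i
        rw [totalDegree_mul_of_isDomain hs hi] at this
        omega
  · rw [h3]
    refine Finset.sum_congr rfl fun i _ => ?_
    by_cases hi : q i = 0 <;> simp [hi]

lemma evalEval_cont (Q : Polynomial (Polynomial ℝ)) :
    Continuous (fun z : ℝ × ℝ => Q.evalEval z.1 z.2) := by
  induction Q using Polynomial.induction_on' with
  | add p q hp hq =>
    simp only [Polynomial.evalEval_add]
    exact hp.add hq
  | monomial n r =>
    have : Continuous (fun z : ℝ × ℝ => r.eval z.1 * z.2 ^ n) :=
      (r.continuous.comp continuous_fst).mul (continuous_snd.pow n)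
    simpa [Polynomial.evalEval] using this

lemma affPoly_eval {n : ℕ} (α : Fin n → ℝ) (c : ℝ) (x : Fin n → ℝ) :
    eval x (C c + ∑ i, C (α i) * X i : MvPolynomial (Fin n) ℝ) = affEval α c x := by
  simp [affEval]

lemma affPoly_deg {n : ℕ} (α : Fin n → ℝ) (c : ℝ) :
    (C c + ∑ i, C (α i) * X i : MvPolynomial (Fin n) ℝ).totalDegree ≤ 1 := by
  refine (totalDegree_add _ _).trans (max_le (by simp) ?_)
  refine totalDegree_finsetSum_le fun i _ => ?_
  refine (totalDegree_mul _ _).trans ?_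
  simp

lemma core {n m : ℕ}
    (p : Fin m → MvPolynomial (Fin n) ℝ) (S : Set (Fin n → ℝ))
    (hS : S = basicClosedSet p) (hconv : Convex ℝ S) (hint : (interior S).Nonempty)
    (d : ℕ) (h : ∀ l : MvPolynomial (Fin n) ℝ, l.totalDegree ≤ 1 →
      (∀ x ∈ S, 0 ≤ eval x l) → l ∈ QM p d)
    (x0 y : Fin n → ℝ) (hx0 : x0 ∈ S) (hy : y ∈ S)
    (hz : ∀ ε : ℝ, 0 < ε → x0 - ε • (y - x0) ∉ S)
    (hN : ∀ (α : Fin n → ℝ) (c : ℝ), (∀ x ∈ S, 0 ≤ affEval α c x) → affEval α c x0 = 0 →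
      affEval α c y = 0) : False := by
  have hcl : IsClosed S := by
    rw [hS, basicClosedSet, Set.ofPred_forall]
    exact isClosed_iInter fun i => isClosed_le continuous_const (MvPolynomial.continuous_eval _)
  obtain ⟨u, hu⟩ := hint
  set v := y - x0 with hv
  set w := u - x0 with hw
  obtain ⟨q, hq⟩ : ∃ q : Fin (m + 1) → MvPolynomial (Fin n) ℝ, q = Fin.cons 1 p := ⟨_, rfl⟩
  have hqS : ∀ i, ∀ x ∈ S, 0 ≤ eval x (q i) := by
    intro i x hx
    rw [hS] at hx
    rw [hq]
    refine Fin.cases ?_ (fun j => ?_) i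
    · simp
    · simpa using hx j
  -- boundary points
  have hbd : ∀ k : ℕ, ∃ a b : ℝ, -(1 / ((k : ℝ) + 1)) ≤ a ∧ a ≤ 0 ∧ 0 < b ∧ b ≤ 1 / ((k : ℝ) + 1) ∧
      x0 + a • v + b • w ∈ S ∧ x0 + a • v + b • w ∉ interior S := fun k =>
    boundary_pt S hcl hconv x0 v u hx0 hu hz _ (by positivity)
      (by rw [div_le_one (by positivity)]; linarith [(Nat.cast_nonneg k : (0:ℝ) ≤ k)])
  choose a b ha1 ha2 hb1 hb2 hxS hxI using hbd
  have hsup : ∀ k, _ := fun k => support_fn S hconv ⟨u, hu⟩ _ (hxI k)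
  choose α c hα hpos hzero using hsup
  have hrep : ∀ k, _ := fun k => QM_repr p d _ (h (C (c k) + ∑ i, C (α k i) * X i)
    (affPoly_deg _ _) (fun x hx => by rw [affPoly_eval]; exact hpos k x hx)) q hq
  choose σ hσ0 hσd hσz hσ using hrep
  have hσe : ∀ k x, affEval (α k) (c k) x = ∑ i, eval x (σ k i) * eval x (q i) := by
    intro k x
    rw [← affPoly_eval, hσ k]
    simp
  -- limits
  let 𝓤 : Ultrafilter ℕ := Filter.hyperfilter ℕ
  have hU : (𝓤 : Filter ℕ) ≤ Filter.atTop := Nat.hyperfilter_le_atTop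
  have h1k : Filter.Tendsto (fun k : ℕ => 1 / ((k : ℝ) + 1)) 𝓤 (nhds 0) :=
    tendsto_one_div_add_atTop_nhds_zero_nat.mono_left hU
  have ha : Filter.Tendsto a 𝓤 (nhds 0) :=
    tendsto_of_tendsto_of_tendsto_of_le_of_le (by simpa using h1k.neg) tendsto_const_nhds ha1 ha2
  have hb : Filter.Tendsto b 𝓤 (nhds 0) :=
    tendsto_of_tendsto_of_tendsto_of_le_of_le tendsto_const_nhds h1k (fun k => (hb1 k).le) hb2
  have hx : Filter.Tendsto (fun k => x0 + a k • v + b k • w) 𝓤 (nhds x0) := by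
    have := (tendsto_const_nhds (x := x0)).add (ha.smul_const v) |>.add (hb.smul_const w)
    simpa using this
  obtain ⟨α', hα'1, hα'⟩ : ∃ α', ‖α'‖ = 1 ∧ Filter.Tendsto α 𝓤 (nhds α') := by
    obtain ⟨α', h1, h2⟩ := (isCompact_sphere (0 : Fin n → ℝ) 1).ultrafilter_le_nhds (𝓤.map α) (by
      rw [Filter.le_principal_iff]
      exact Filter.mem_map.2 (Filter.univ_mem' (fun k => by simp [hα k])))
    exact ⟨α', by simpa using h1, h2⟩
  have hdot : ∀ (z : ℕ → Fin n → ℝ) z', Filter.Tendsto z 𝓤 (nhds z') →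
      Filter.Tendsto (fun k => ∑ i, α k i * z k i) 𝓤 (nhds (∑ i, α' i * z' i)) := fun z z' hz' =>
    tendsto_finsetSum _ fun i _ => (tendsto_pi_nhds.1 hα' i).mul (tendsto_pi_nhds.1 hz' i)
  obtain ⟨c', hc'⟩ : ∃ c', Filter.Tendsto c 𝓤 (nhds c') := by
    refine ⟨-(∑ i, α' i * x0 i), ?_⟩
    refine (hdot _ _ hx).neg.congr fun k => ?_
    have := hzero k
    rw [affEval] at this
    linarith
  have haff : ∀ (z : ℕ → Fin n → ℝ) z', Filter.Tendsto z 𝓤 (nhds z') →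
      Filter.Tendsto (fun k => affEval (α k) (c k) (z k)) 𝓤 (nhds (affEval α' c' z')) :=
    fun z z' hz' => hc'.add (hdot z z' hz')
  have hpos' : ∀ z ∈ S, 0 ≤ affEval α' c' z := fun z hzS =>
    ge_of_tendsto' (haff _ z tendsto_const_nhds) fun k => hpos k z hzS
  have hx0' : affEval α' c' x0 = 0 :=
    tendsto_nhds_unique (haff _ _ hx) (by simp only [hzero]; exact tendsto_const_nhds)
  have hy' := hN α' c' hpos' hx0'
  have hL : 0 < affEval α' c' u := pos_interior S u hu α' c'
    (by rintro rfl; simp at hα'1) hpos'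
  -- bounded
  have hlim : ∀ i, ∃ g : MvPolynomial (Fin n) ℝ, ∀ (x : ℕ → Fin n → ℝ) (x0 : Fin n → ℝ),
      Filter.Tendsto x 𝓤 (nhds x0) →
      Filter.Tendsto (fun k => eval (x k) (σ k i)) 𝓤 (nhds (eval x0 g)) := by
    intro i
    by_cases hqi : q i = 0
    · refine ⟨0, fun x x0 _ => ?_⟩
      simp only [fun k => hσz k i hqi, map_zero]
      exact tendsto_const_nhds
    · refine poly_lim 𝓤 d (interior S ∩ {x | eval x (q i) ≠ 0}) ?_ _ (fun k => hσd k i) ?_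
      · intro f hf
        have : f * q i = 0 := by
          refine eq_zero_of_open (interior S) isOpen_interior ⟨u, hu⟩ _ fun x hx => ?_
          by_cases hxq : eval x (q i) = 0
          · simp [hxq]
          · simp [hf x ⟨hx, hxq⟩]
        exact (mul_eq_zero.1 this).resolve_right hqi
      · rintro x ⟨hxi, hxq⟩
        have hxS' := interior_subset hxi
        have hqx : 0 < eval x (q i) := lt_of_le_of_ne (hqS i x hxS') (Ne.symm hxq)
        -- bound of the affine functions
        obtain ⟨B, hB⟩ : ∃ B, ∀ k, affEval (α k) (c k) x ≤ B := by
          refine ⟨∑ j, (|x j| + |x0 j| + |v j| + |w j|), fun k => ?_⟩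
          have h1 : affEval (α k) (c k) x = ∑ j, α k j * (x - (x0 + a k • v + b k • w)) j := by
            rw [← affEval_sub (c := c k), hzero, sub_zero]
          rw [h1]
          refine Finset.sum_le_sum fun j _ => ?_
          have h2 : |α k j| ≤ 1 := by
            have := norm_le_pi_norm (α k) j
            rwa [hα, Real.norm_eq_abs] at this
          have hk1 : 1 / ((k : ℝ) + 1) ≤ 1 := by
            rw [div_le_one (by positivity)]; linarith [(Nat.cast_nonneg k : (0:ℝ) ≤ k)]
          have h3 : |a k| ≤ 1 := abs_le.2 ⟨by linarith [ha1 k], by linarith [ha2 k]⟩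
          have h4 : |b k| ≤ 1 := abs_le.2 ⟨by linarith [hb1 k], by linarith [hb2 k]⟩
          have h5 : |(x - (x0 + a k • v + b k • w)) j| ≤ |x j| + |x0 j| + |v j| + |w j| := by
            simp only [Pi.sub_apply, Pi.add_apply, Pi.smul_apply, smul_eq_mul]
            have e1 : |a k * v j| ≤ |v j| := by
              rw [abs_mul]; exact mul_le_of_le_one_left (abs_nonneg _) h3
            have e2 : |b k * w j| ≤ |w j| := by
              rw [abs_mul]; exact mul_le_of_le_one_left (abs_nonneg _) h4
            have e3 := abs_sub (x j) (x0 j + a k * v j + b k * w j)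
            have e4 := abs_add_le (x0 j + a k * v j) (b k * w j)
            have e5 := abs_add_le (x0 j) (a k * v j)
            linarith
          calc _ ≤ |α k j * (x - (x0 + a k • v + b k • w)) j| := le_abs_self _
            _ = |α k j| * |(x - (x0 + a k • v + b k • w)) j| := abs_mul _ _
            _ ≤ |(x - (x0 + a k • v + b k • w)) j| := mul_le_of_le_one_left (abs_nonneg _) h2
            _ ≤ _ := h5
        refine ⟨B / eval x (q i), fun k => ?_⟩
        rw [abs_of_nonneg (hσ0 k i x), le_div_iff₀ hqx]
        refine le_trans ?_ (hB k)
        rw [hσe]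
        exact Finset.single_le_sum (f := fun i => eval x (σ k i) * eval x (q i))
          (fun j _ => mul_nonneg (hσ0 k j x) (hqS j x hxS')) (Finset.mem_univ i)
  choose τ hτ using hlim
  have hτ0 : ∀ i x, 0 ≤ eval x (τ i) := fun i x =>
    ge_of_tendsto' (hτ i _ x tendsto_const_nhds) fun k => hσ0 k i x
  have hτe : ∀ x, ∑ i, eval x (τ i) * eval x (q i) = affEval α' c' x := fun x =>
    tendsto_nhds_unique
      (tendsto_finsetSum _ fun i _ => (hτ i (fun _ => x) x tendsto_const_nhds).mul_const _)
      (by simp only [← hσe]; exact haff _ _ tendsto_const_nhds)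
  -- bivariate
  choose T hT using fun i => biv (τ i) x0 v w
  choose P hP using fun i => biv (q i) x0 v w
  obtain ⟨i, Q, hPQ, hTi, hQi⟩ := key_biv T P (affEval α' c' u) hL
    (fun i a b => by rw [← hT]; exact hτ0 i _)
    (fun i t ht => by
      rw [← hT, ← hP, zero_smul, add_zero]
      have hmem : x0 + t • v ∈ S := hconv.add_smul_sub_mem hx0 hy ht
      have h0 : affEval α' c' (x0 + t • v) = 0 := by
        rw [affEval_combo, ← affEval_sub (c := c'), hy', hx0']; simp
      rw [← hτe] at h0
      exact (Finset.sum_eq_zero_iff_of_nonneg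
        (fun j _ => mul_nonneg (hτ0 j _) (hqS j _ hmem))).1 h0 i (Finset.mem_univ i))
    (fun s => by
      simp only [← hT, ← hP, zero_smul, add_zero, hτe]
      rw [affEval_combo, ← affEval_sub (c := c'), hx0', zero_add, sub_zero])
  have hτx : 0 < eval x0 (τ i) := by
    have := hT i 0 0
    simp only [zero_smul, add_zero] at this
    rwa [this]
  have hev1 := (hτ i _ _ hx).eventually (lt_mem_nhds hτx)
  have hQc : Filter.Tendsto (fun k => Q.evalEval (a k) (b k)) 𝓤 (nhds (Q.evalEval 0 0)) := by
    have hcont := evalEval_cont Q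
    exact (hcont.tendsto (0, 0)).comp (ha.prodMk_nhds hb)
  have hev2 := hQc.eventually (lt_mem_nhds hQi)
  obtain ⟨k, hk1, hk2⟩ := (hev1.and hev2).exists
  have hzk := hzero k
  rw [hσe] at hzk
  have := (Finset.sum_eq_zero_iff_of_nonneg
        (fun j _ => mul_nonneg (hσ0 k j _) (hqS j _ (hxS k)))).1 hzk i (Finset.mem_univ i)
  have hqk : 0 < eval (x0 + a k • v + b k • w) (q i) := by
    rw [hP, hPQ, evalEval_X_mul]
    exact mul_pos (hb1 k) hk2
  exact (mul_pos hk1 hqk).ne' this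

lemma relint_pt {n : ℕ} (F : Set (Fin n → ℝ)) (hF : Convex ℝ F) (hne : F.Nonempty) :
    ∃ x0 ∈ F, ∀ x ∈ F, ∃ ε : ℝ, 0 < ε ∧ x0 - ε • (x - x0) ∈ F := by
  obtain ⟨x0, hx0⟩ := hne.intrinsicInterior hF
  refine ⟨x0, intrinsicInterior_subset hx0, fun x hx => ?_⟩
  obtain ⟨w, hw, rfl⟩ := mem_intrinsicInterior.1 hx0
  let g : ℝ → affineSpan ℝ F := fun t =>
    ⟨AffineMap.lineMap (w : Fin n → ℝ) x (-t),
      AffineMap.lineMap_mem _ w.2 (subset_affineSpan ℝ F hx)⟩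
  have hg : Continuous g := by
    refine Continuous.subtype_mk ?_ _
    simp only [AffineMap.lineMap_apply_module']
    fun_prop
  have hg0 : g 0 = w := by
    apply Subtype.ext
    simp [g]
  have hev : ∀ᶠ t in nhds (0 : ℝ), g t ∈ interior ((↑) ⁻¹' F : Set (affineSpan ℝ F)) :=
    hg.continuousAt.eventually (by rw [hg0]; exact isOpen_interior.mem_nhds hw)
  obtain ⟨ε, hε, hb⟩ := Metric.eventually_nhds_iff.1 hev
  have h1 := @hb (ε / 2) (by rw [Real.dist_eq, sub_zero, abs_of_pos] <;> linarith)
  have h2 : AffineMap.lineMap (w : Fin n → ℝ) x (-(ε / 2)) ∈ F :=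
    (interior_subset h1 : g (ε / 2) ∈ ((↑) ⁻¹' F : Set (affineSpan ℝ F)))
  refine ⟨ε / 2, by linarith, ?_⟩
  rw [AffineMap.lineMap_apply_module'] at h2
  convert h2 using 1
  module

lemma exists_best {n : ℕ} (S : Set (Fin n → ℝ)) (x0 : Fin n → ℝ) :
    ∃ (α : Fin n → ℝ) (c : ℝ), (∀ x ∈ S, 0 ≤ affEval α c x) ∧ affEval α c x0 = 0 ∧
      ∀ y ∈ S, affEval α c y = 0 → ∀ (β : Fin n → ℝ) (e : ℝ), (∀ x ∈ S, 0 ≤ affEval β e x) →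
        affEval β e x0 = 0 → affEval β e y = 0 := by
  let A : (Fin n → ℝ) → ((Fin n → ℝ) × ℝ →ₗ[ℝ] ℝ) := fun x =>
    { toFun := fun e => affEval e.1 e.2 x
      map_add' := fun e f => by
        simp only [affEval, Prod.fst_add, Prod.snd_add, Pi.add_apply, add_mul,
          Finset.sum_add_distrib]
        ring
      map_smul' := fun r e => by
        simp only [affEval, Prod.smul_fst, Prod.smul_snd, Pi.smul_apply, smul_eq_mul, mul_assoc,
          ← Finset.mul_sum, RingHom.id_apply]
        ring }
  let N : Set ((Fin n → ℝ) × ℝ) := {e | (∀ x ∈ S, 0 ≤ A x e) ∧ A x0 e = 0}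
  obtain ⟨t, htN, hspan⟩ := (Submodule.fg_span_iff_fg_span_finset_subset (R := ℝ) N).1
    (IsNoetherian.noetherian _)
  have hE : ∀ x, affEval (∑ e ∈ t, e).1 (∑ e ∈ t, e).2 x = ∑ e ∈ t, A x e := fun x =>
    map_sum (A x) (fun e => e) t
  refine ⟨(∑ e ∈ t, e).1, (∑ e ∈ t, e).2, fun x hx => ?_, ?_, fun y hy hy0 β e hβ hβ0 => ?_⟩
  · rw [hE]
    exact Finset.sum_nonneg fun e he => (htN he).1 x hx
  · rw [hE]
    exact Finset.sum_eq_zero fun e he => (htN he).2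
  · rw [hE] at hy0
    have h1 := (Finset.sum_eq_zero_iff_of_nonneg fun e he => (htN he).1 y hy).1 hy0
    have h2 : Submodule.span ℝ (t : Set ((Fin n → ℝ) × ℝ)) ≤ LinearMap.ker (A y) :=
      Submodule.span_le.2 fun e he => h1 e he
    rw [← hspan] at h2
    exact h2 (Submodule.subset_span (show (β, e) ∈ N from ⟨hβ, hβ0⟩))

/-- If `S = S(p₁,…,p_m)` is convex with non-empty interior and there is
`d ≥ 1` such that every affine-linear polynomial `ℓ` with `ℓ ≥ 0` on `S` lies in
`QM(p)_d`, then every face of `S` is exposed. -/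
theorem linearInQM_implies_facesExposed {n m : ℕ}
    (p : Fin m → MvPolynomial (Fin n) ℝ) (S : Set (Fin n → ℝ))
    (hS : S = basicClosedSet p) (hconv : Convex ℝ S) (hint : (interior S).Nonempty)
    (h : ∃ d : ℕ, 1 ≤ d ∧ ∀ l : MvPolynomial (Fin n) ℝ, l.totalDegree ≤ 1 →
      (∀ x ∈ S, 0 ≤ eval x l) → l ∈ QM p d) :
    ∀ F : Set (Fin n → ℝ), IsFaceOf S F → IsExposedFaceOf S F := by
  obtain ⟨d, _, h⟩ := h
  rintro F ⟨hFne, hFc, hFS, hFf⟩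
  by_cases hFeq : F = S
  · exact Or.inl hFeq
  right
  obtain ⟨x0, hx0, hrel⟩ := relint_pt F hFc hFne
  have hmain : ∀ y ∈ S, (∀ (α : Fin n → ℝ) (c : ℝ), (∀ x ∈ S, 0 ≤ affEval α c x) →
      affEval α c x0 = 0 → affEval α c y = 0) → y ∈ F := by
    intro y hy hN
    by_contra hyF
    refine core p S hS hconv hint d h x0 y (hFS hx0) hy (fun ε hε hzS => hyF ?_) hN
    have hl : 0 < 1 / (1 + ε) := by positivity
    have hl1 : 1 / (1 + ε) < 1 := by rw [div_lt_one (by positivity)]; linarith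
    refine (hFf _ hzS y hy (1 / (1 + ε)) hl hl1 ?_).2
    have : (1 / (1 + ε)) • (x0 - ε • (y - x0)) + (1 - 1 / (1 + ε)) • y = x0 := by
      ext j
      simp only [Pi.add_apply, Pi.smul_apply, Pi.sub_apply, smul_eq_mul]
      field_simp
      ring
    rwa [this]
  obtain ⟨α, c, hpos, h0, hall⟩ := exists_best S x0
  refine ⟨α, c, ?_, hpos, ⟨x0, h0, hFS hx0⟩, ?_⟩
  · intro hz
    apply hFeq
    refine hFS.antisymm fun y hy => hmain y hy fun β e hβ hβ0 => hall y hy ?_ β e hβ hβ0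
    rw [hz]; rfl
  · ext y
    constructor
    · rintro ⟨hy0, hyS⟩
      exact hmain y hyS (hall y hyS hy0)
    · intro hy
      refine ⟨?_, hFS hy⟩
      obtain ⟨ε, hε, hmem⟩ := hrel y hy
      have h1 := hpos _ (hFS hmem)
      have h2 := hpos _ (hFS hy)
      have h3 := affEval_sub α c x0 y
      rw [sub_eq_add_neg, ← neg_smul, affEval_combo, ← h3, h0] at h1
      show affEval α c y = 0
      nlinarith
end

section
/- Let p = (p_1,…,p_m) be real polynomials in n variables and assume S = S(p_1,…,p_m) has non-empty interior. For every d ∈ ℕ the following are equivalent: (1) conv(S) ⊆ S(p)_d ⊆ closure(conv(S)); (2) every affine-linear polynomial ℓ of degree ≤ 1 with ℓ ≥ 0 on S is contained in QM(p)_d. -/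
open MvPolynomial

lemma aux_isCompact_convexHull {E : Type*} [NormedAddCommGroup E] [NormedSpace ℝ E]
    [FiniteDimensional ℝ E] {s : Set E} (hs : IsCompact s) : IsCompact (convexHull ℝ s) := by
  have key : convexHull ℝ s = ⋃ k ∈ Finset.range (Module.finrank ℝ E + 2),
      (fun q : (Fin k → ℝ) × (Fin k → E) => ∑ j, q.1 j • q.2 j) ''
        (stdSimplex ℝ (Fin k) ×ˢ Set.pi Set.univ (fun _ => s)) := by
    apply Set.Subset.antisymm
    · intro x hx
      obtain ⟨ι, _, z, w, hz, hai, hw, hw1, hx⟩ := eq_pos_convex_span_of_mem_convexHull hx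
      have hcard : Fintype.card ι ≤ Module.finrank ℝ E + 1 :=
        hai.card_le_finrank_succ.trans (Nat.succ_le_succ (Submodule.finrank_le _))
      let e := (Fintype.equivFin ι).symm
      simp only [Set.mem_iUnion]
      refine ⟨Fintype.card ι, Finset.mem_range.2 (by omega), (w ∘ e, z ∘ e), ⟨⟨?_, ?_⟩, ?_⟩, ?_⟩
      · intro j; exact (hw _).le
      · rw [← hw1]; exact e.sum_comp w
      · intro j _; exact hz ⟨_, rfl⟩
      · rw [← hx]; exact e.sum_comp (fun i => w i • z i)
    · intro x hx
      simp only [Set.mem_iUnion] at hx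
      obtain ⟨k, _, ⟨w, z⟩, ⟨⟨hw, hw1⟩, hz⟩, rfl⟩ := hx
      exact (convex_convexHull ℝ s).sum_mem (fun j _ => hw j) hw1
        (fun j _ => subset_convexHull ℝ s (hz j trivial))
  rw [key]
  refine Finset.isCompact_biUnion _ fun k _ => ?_
  refine ((isCompact_stdSimplex ℝ (Fin k)).prod (isCompact_univ_pi fun _ => hs)).image ?_
  fun_prop

lemma aux_sep_normed {ι : Type*} [Finite ι] {E : Type*} [NormedAddCommGroup E] [NormedSpace ℝ E]
    [FiniteDimensional ℝ E] {W : ι → Type*} [∀ i, NormedAddCommGroup (W i)]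
    [∀ i, NormedSpace ℝ (W i)] [∀ i, FiniteDimensional ℝ (W i)]
    (B : ∀ i, W i →ₗ[ℝ] W i →ₗ[ℝ] E) (K : Set E) (h0 : (0 : E) ∈ K)
    (hadd : ∀ x ∈ K, ∀ y ∈ K, x + y ∈ K) (hsmul : ∀ c : ℝ, 0 ≤ c → ∀ x ∈ K, c • x ∈ K)
    (hsal : ∀ x ∈ K, -x ∈ K → x = 0)
    (hB : ∀ i w, B i w w ∈ K) (hB0 : ∀ i w, B i w w = 0 → w = 0) (l : E) (hl : l ∉ K) :
    ∃ f : E →ₗ[ℝ] ℝ, (∀ i w, 0 ≤ f (B i w w)) ∧ f l < 0 := by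
  let T : Set E := insert (-l) (⋃ i, (fun w => B i w w) '' Metric.sphere (0 : W i) 1)
  have hT : IsCompact T := by
    refine IsCompact.insert (isCompact_iUnion fun i => ?_) _
    have := FiniteDimensional.proper ℝ (W i)
    refine (isCompact_sphere _ _).image ?_
    let B' : W i →ₗ[ℝ] W i →L[ℝ] E :=
      (LinearMap.toContinuousLinearMap : (W i →ₗ[ℝ] E) ≃ₗ[ℝ] (W i →L[ℝ] E)).toLinearMap ∘ₗ (B i)
    have hc : Continuous B' := B'.continuous_of_finiteDimensional
    exact hc.clm_apply continuous_id
  let N : Set E := {x | ∃ a : ℝ, 0 ≤ a ∧ ∃ c ∈ K, x = c - a • l ∧ ¬ (c = 0 ∧ a = 0)}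
  have hN : Convex ℝ N := by
    rintro _ ⟨a, ha, c, hc, rfl, hn⟩ _ ⟨a', ha', c', hc', rfl, hn'⟩ s t hs ht hst
    refine ⟨s * a + t * a', by positivity, s • c + t • c',
      hadd _ (hsmul s hs _ hc) _ (hsmul t ht _ hc'), by module, ?_⟩
    rintro ⟨h1, h2⟩
    have h3 : s * a = 0 := by nlinarith [mul_nonneg hs ha, mul_nonneg ht ha']
    have h4 : t * a' = 0 := by nlinarith [mul_nonneg hs ha, mul_nonneg ht ha']
    have h5 : s • c = 0 := hsal _ (hsmul s hs _ hc) (by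
      rw [neg_eq_of_add_eq_zero_right h1]; exact hsmul t ht _ hc')
    have h6 : t • c' = 0 := by rwa [h5, zero_add] at h1
    rcases eq_or_ne s 0 with rfl | hs0
    · have : t = 1 := by linarith
      subst this
      exact hn' ⟨by simpa using h6, by simpa using h4⟩
    · exact hn ⟨(smul_eq_zero.1 h5).resolve_left hs0, (mul_eq_zero.1 h3).resolve_left hs0⟩
  have hTN : T ⊆ N := by
    rintro x (rfl | hx)
    · exact ⟨1, zero_le_one, 0, h0, by simp, by simp⟩
    · obtain ⟨i, w, hw, rfl⟩ := Set.mem_iUnion.1 hx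
      refine ⟨0, le_rfl, _, hB i w, by simp, ?_⟩
      rintro ⟨h, _⟩
      have := hB0 i w h
      subst this
      simp at hw
  have h0N : (0 : E) ∉ N := by
    rintro ⟨a, ha, c, hc, h, hn⟩
    have hca : c = a • l := (sub_eq_zero.1 h.symm)
    rcases eq_or_ne a 0 with rfl | ha0
    · exact hn ⟨by simpa using hca, rfl⟩
    · apply hl
      have := hsmul a⁻¹ (inv_nonneg.2 ha) c hc
      rwa [hca, smul_smul, inv_mul_cancel₀ ha0, one_smul] at this
  have h0T : (0 : E) ∉ convexHull ℝ T := fun h => h0N (convexHull_min hTN hN h)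
  obtain ⟨f, u, hu, hf⟩ := geometric_hahn_banach_point_closed (convex_convexHull ℝ T)
    (aux_isCompact_convexHull hT).isClosed h0T
  have hfT : ∀ x ∈ T, 0 < f x := fun x hx => by
    have := hf x (subset_convexHull ℝ T hx)
    rw [map_zero] at hu
    linarith
  refine ⟨f.toLinearMap, fun i w => ?_, ?_⟩
  · rcases eq_or_ne w 0 with rfl | hw
    · simp
    · have h1 : 0 < f (B i (‖w‖⁻¹ • w) (‖w‖⁻¹ • w)) := by
        apply hfT
        refine Or.inr (Set.mem_iUnion.2 ⟨i, _, ?_, rfl⟩)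
        simp [norm_smul, hw]
      simp only [map_smul, LinearMap.smul_apply, smul_eq_mul] at h1
      have hw' : 0 < ‖w‖⁻¹ := by positivity
      have h2 := (pos_of_mul_pos_right h1 hw'.le)
      have h3 := (pos_of_mul_pos_right h2 hw'.le)
      exact h3.le
  · have := hfT (-l) (Or.inl rfl)
    rw [map_neg] at this
    simpa using this

lemma aux_sep {ι : Type*} [Finite ι] {E : Type*} [AddCommGroup E] [Module ℝ E]
    [FiniteDimensional ℝ E] {W : ι → Type*} [∀ i, AddCommGroup (W i)]
    [∀ i, Module ℝ (W i)] [∀ i, FiniteDimensional ℝ (W i)]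
    (B : ∀ i, W i →ₗ[ℝ] W i →ₗ[ℝ] E) (K : Set E) (h0 : (0 : E) ∈ K)
    (hadd : ∀ x ∈ K, ∀ y ∈ K, x + y ∈ K) (hsmul : ∀ c : ℝ, 0 ≤ c → ∀ x ∈ K, c • x ∈ K)
    (hsal : ∀ x ∈ K, -x ∈ K → x = 0)
    (hB : ∀ i w, B i w w ∈ K) (hB0 : ∀ i w, B i w w = 0 → w = 0) (l : E) (hl : l ∉ K) :
    ∃ f : E →ₗ[ℝ] ℝ, (∀ i w, 0 ≤ f (B i w w)) ∧ f l < 0 := by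
  let e := (Module.finBasis ℝ E).equivFun
  let : NormedAddCommGroup E := NormedAddCommGroup.induced E _ e e.injective
  let : NormedSpace ℝ E := NormedSpace.induced ℝ E _ e
  let e' := fun i => (Module.finBasis ℝ (W i)).equivFun
  let : ∀ i, NormedAddCommGroup (W i) := fun i =>
    NormedAddCommGroup.induced (W i) _ (e' i) (e' i).injective
  let : ∀ i, NormedSpace ℝ (W i) := fun i => NormedSpace.induced ℝ (W i) _ (e' i)
  exact aux_sep_normed B K h0 hadd hsmul hsal hB hB0 l hl

lemma aux_sos_deg {n r : ℕ} (f : Fin r → MvPolynomial (Fin n) ℝ) (D : ℕ)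
    (hD : (∑ j, f j ^ 2).totalDegree ≤ D) (j : Fin r) : 2 * (f j).totalDegree ≤ D := by
  by_contra hcon
  push Not at hcon
  obtain ⟨j0, -, hj0⟩ := Finset.exists_max_image Finset.univ (fun j => (f j).totalDegree) ⟨j, Finset.mem_univ j⟩
  set N := (f j0).totalDegree with hN
  have hjN := hj0 j (Finset.mem_univ j)
  have hND : D < 2 * N := by omega
  have hsq : ∀ k, homogeneousComponent (2 * N) (f k ^ 2) = homogeneousComponent N (f k) ^ 2 := by
    intro k
    have hk := hj0 k (Finset.mem_univ k)
    set g := homogeneousComponent N (f k) with hg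
    have hgh : g.IsHomogeneous N := homogeneousComponent_isHomogeneous N (f k)
    set h := f k - g with hh
    have hfk : f k = g + h := by rw [hh]; ring
    have hhdeg : h = 0 ∨ h.totalDegree < N := by
      by_cases h0 : h = 0
      · exact Or.inl h0
      right
      have hle : h.totalDegree ≤ N := (totalDegree_sub _ _).trans (max_le hk hgh.totalDegree_le)
      refine lt_of_le_of_ne hle fun heq => h0 ?_
      have hc : homogeneousComponent N h = 0 := by
        rw [hh, map_sub, homogeneousComponent_of_mem hgh]
        simp [hg]
      obtain ⟨s, hs, hs'⟩ := Finset.exists_mem_eq_sup h.support (support_nonempty.2 h0)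
        (fun s => s.sum fun _ e => e)
      exfalso
      have : coeff s (homogeneousComponent N h) = coeff s h := by
        rw [coeff_homogeneousComponent, if_pos]
        rw [← heq]
        exact hs'.symm
      rw [hc, coeff_zero] at this
      exact (mem_support_iff.1 hs) this.symm
    have hz : homogeneousComponent (2 * N) (f k ^ 2 - g ^ 2) = 0 := by
      have : f k ^ 2 - g ^ 2 = (2 • g + h) * h := by rw [hfk]; ring
      rw [this]
      rcases hhdeg with h0 | h0
      · simp [h0]
      · apply homogeneousComponent_eq_zero
        have h1 := totalDegree_mul (2 • g + h) h
        have h2 := totalDegree_add (2 • g) h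
        have h3 := (totalDegree_smul_le 2 g).trans hgh.totalDegree_le
        have : max (2 • g).totalDegree h.totalDegree ≤ N := max_le h3 h0.le
        omega
    have : f k ^ 2 = (f k ^ 2 - g ^ 2) + g ^ 2 := by ring
    rw [this, map_add, hz, zero_add, homogeneousComponent_eq_self]
    have := hgh.pow 2
    rwa [mul_comm] at this
  have hsum : ∑ k, homogeneousComponent N (f k) ^ 2 = 0 := by
    rw [← homogeneousComponent_eq_zero (2 * N) (∑ j, f j ^ 2) (by omega), map_sum]
    exact Finset.sum_congr rfl fun k _ => (hsq k).symm
  have hz : homogeneousComponent N (f j0) = 0 := by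
    apply MvPolynomial.funext
    intro x
    have h1 := congrArg (eval x) hsum
    rw [map_sum, map_zero, Finset.sum_eq_zero_iff_of_nonneg (fun k _ => by
      rw [map_pow]; positivity)] at h1
    have := h1 j0 (Finset.mem_univ _)
    rw [map_pow] at this
    simpa using this
  have hne : f j0 ≠ 0 := by
    intro h
    rw [h, totalDegree_zero] at hN
    omega
  obtain ⟨s, hs, hs'⟩ := Finset.exists_mem_eq_sup (f j0).support (support_nonempty.2 hne)
    (fun s => s.sum fun _ e => e)
  have : coeff s (homogeneousComponent N (f j0)) = coeff s (f j0) := by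
    rw [coeff_homogeneousComponent, if_pos]
    exact hs'.symm
  rw [hz, coeff_zero] at this
  exact (mem_support_iff.1 hs) this.symm

lemma aux_sos_add {n : ℕ} {a b : MvPolynomial (Fin n) ℝ} (ha : IsSOS a) (hb : IsSOS b) :
    IsSOS (a + b) := by
  obtain ⟨r, f, rfl⟩ := ha
  obtain ⟨s, g, rfl⟩ := hb
  exact ⟨r + s, Fin.append f g, by simp [Fin.sum_univ_add]⟩

lemma aux_sos_zero {n : ℕ} : IsSOS (0 : MvPolynomial (Fin n) ℝ) := ⟨0, Fin.elim0, by simp⟩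

lemma aux_sos_smul {n : ℕ} {a : MvPolynomial (Fin n) ℝ} (ha : IsSOS a) {c : ℝ} (hc : 0 ≤ c) :
    IsSOS (c • a) := by
  obtain ⟨r, f, rfl⟩ := ha
  refine ⟨r, fun j => Real.sqrt c • f j, ?_⟩
  simp [smul_pow, Real.sq_sqrt hc, Finset.smul_sum]

lemma aux_sos_eval {n : ℕ} {a : MvPolynomial (Fin n) ℝ} (ha : IsSOS a) (x : Fin n → ℝ) :
    0 ≤ eval x a := by
  obtain ⟨r, f, rfl⟩ := ha
  simp only [map_sum, map_pow]
  positivity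

section
variable {n m : ℕ} {p : Fin m → MvPolynomial (Fin n) ℝ} {d : ℕ}

lemma aux_QM_zero : (0 : MvPolynomial (Fin n) ℝ) ∈ QM p d :=
  ⟨fun _ => 0, fun _ => aux_sos_zero, by simp, by simp⟩

lemma aux_QM_add {a b : MvPolynomial (Fin n) ℝ} (ha : a ∈ QM p d) (hb : b ∈ QM p d) :
    a + b ∈ QM p d := by
  obtain ⟨s, h1, h2, rfl⟩ := ha
  obtain ⟨t, h3, h4, rfl⟩ := hb
  refine ⟨fun i => s i + t i, fun i => aux_sos_add (h1 i) (h3 i), fun i => ?_, ?_⟩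
  · rw [add_mul]
    exact (totalDegree_add _ _).trans (max_le (h2 i) (h4 i))
  · simp only [add_mul, Finset.sum_add_distrib]

lemma aux_QM_smul {a : MvPolynomial (Fin n) ℝ} (ha : a ∈ QM p d) {c : ℝ} (hc : 0 ≤ c) :
    c • a ∈ QM p d := by
  obtain ⟨s, h1, h2, rfl⟩ := ha
  refine ⟨fun i => c • s i, fun i => aux_sos_smul (h1 i) hc, fun i => ?_, ?_⟩
  · rw [smul_mul_assoc]
    exact (totalDegree_smul_le _ _).trans (h2 i)
  · simp only [smul_mul_assoc, Finset.smul_sum]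

lemma aux_QM_single (i : Fin (m + 1)) (f : MvPolynomial (Fin n) ℝ)
    (h : (f * f * (Fin.cons 1 p : Fin (m + 1) → MvPolynomial (Fin n) ℝ) i).totalDegree ≤ d) :
    f * f * (Fin.cons 1 p : Fin (m + 1) → MvPolynomial (Fin n) ℝ) i ∈ QM p d := by
  classical
  refine ⟨fun k => if k = i then f * f else 0, fun k => ?_, fun k => ?_, ?_⟩
  · dsimp only
    split_ifs
    · exact ⟨1, fun _ => f, by simp [sq]⟩
    · exact aux_sos_zero
  · dsimp only
    split_ifs with hk
    · subst hk; exact h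
    · simp
  · simp [ite_mul]

lemma aux_QM_one : (1 : MvPolynomial (Fin n) ℝ) ∈ QM p d := by
  have := aux_QM_single (p := p) (d := d) 0 1 (by simp)
  simpa using this

lemma aux_QM_eval {a : MvPolynomial (Fin n) ℝ} (ha : a ∈ QM p d) {x : Fin n → ℝ}
    (hx : x ∈ basicClosedSet p) : 0 ≤ eval x a := by
  obtain ⟨s, h1, h2, rfl⟩ := ha
  rw [map_sum]
  refine Finset.sum_nonneg fun i _ => ?_
  rw [map_mul]
  refine mul_nonneg (aux_sos_eval (h1 i) x) ?_
  refine Fin.cases ?_ (fun i => ?_) i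
  · simp
  · simpa using hx i

lemma aux_zero_of_interior (hint : (interior (basicClosedSet p)).Nonempty)
    {q : MvPolynomial (Fin n) ℝ} (h : ∀ x ∈ basicClosedSet p, eval x q = 0) : q = 0 := by
  obtain ⟨x, hx⟩ := hint
  obtain ⟨ε, hε, hb⟩ := Metric.isOpen_iff.1 isOpen_interior x hx
  refine funext_set (fun i => Metric.ball (x i) ε) (fun i => ?_) (fun y hy => ?_)
  · rw [Real.ball_eq_Ioo]; exact Set.Ioo_infinite (by linarith)
  · rw [map_zero]
    apply h y (interior_subset (hb _))
    rw [ball_pi _ hε]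
    exact hy

lemma aux_QM_sep (hint : (interior (basicClosedSet p)).Nonempty) (l : MvPolynomial (Fin n) ℝ)
    (hl : l ∉ QM p d) :
    ∃ L : MvPolynomial (Fin n) ℝ →ₗ[ℝ] ℝ, (∀ q ∈ QM p d, 0 ≤ L q) ∧ L l < 0 := by
  let P : Fin (m + 1) → MvPolynomial (Fin n) ℝ := Fin.cons 1 p
  let D := max d l.totalDegree
  let V := restrictTotalDegree (Fin n) ℝ D
  let ι := {i : Fin (m + 1) // P i ≠ 0 ∧ (P i).totalDegree ≤ d}
  let W : ι → Submodule ℝ (MvPolynomial (Fin n) ℝ) := fun i =>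
    restrictTotalDegree (Fin n) ℝ ((d - (P i.1).totalDegree) / 2)
  have hdeg : ∀ (i : ι) (f g : W i), (f.1 * g.1 * P i.1).totalDegree ≤ d := by
    intro i f g
    have h1 := (mem_restrictTotalDegree (Fin n) _ f.1).1 f.2
    have h2 := (mem_restrictTotalDegree (Fin n) _ g.1).1 g.2
    have h3 := totalDegree_mul (f.1 * g.1) (P i.1)
    have h4 := totalDegree_mul f.1 g.1
    have h5 := i.2.2
    omega
  let B : ∀ i : ι, W i →ₗ[ℝ] W i →ₗ[ℝ] V := fun i =>
    LinearMap.mk₂ ℝ (fun f g => ⟨f.1 * g.1 * P i.1,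
        (mem_restrictTotalDegree (Fin n) _ _).2 ((hdeg i f g).trans (le_max_left _ _))⟩)
      (fun _ _ _ => Subtype.ext (by simp [add_mul]))
      (fun _ _ _ => Subtype.ext (by simp))
      (fun _ _ _ => Subtype.ext (by simp [add_mul, mul_add]))
      (fun _ _ _ => Subtype.ext (by simp))
  have hBv : ∀ i f, (B i f f).1 = f.1 * f.1 * P i.1 := fun i f => rfl
  obtain ⟨f, hf, hfl⟩ := aux_sep B {v : V | v.1 ∈ QM p d} aux_QM_zero
    (fun x hx y hy => aux_QM_add hx hy) (fun c hc x hx => aux_QM_smul hx hc)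
    (fun x hx hx' => by
      apply Subtype.ext
      refine aux_zero_of_interior hint fun y hy => le_antisymm ?_ (aux_QM_eval hx hy)
      have := aux_QM_eval hx' hy
      simpa using this)
    (fun i w => aux_QM_single i.1 w.1 (hdeg i w w))
    (fun i w h => by
      have h1 := congrArg Subtype.val h
      rw [hBv] at h1
      have h2 := (mul_eq_zero.1 h1).resolve_right i.2.1
      exact Subtype.ext (mul_self_eq_zero.1 h2))
    ⟨l, (mem_restrictTotalDegree (Fin n) _ _).2 (le_max_right _ _)⟩ hl
  obtain ⟨L, hL⟩ := LinearMap.exists_extend f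
  have hL' : ∀ v : V, L v.1 = f v := fun v => by rw [← hL]; rfl
  refine ⟨L, ?_, by rw [← hL'] at hfl; exact hfl⟩
  rintro q ⟨s, h1, h2, rfl⟩
  rw [map_sum]
  refine Finset.sum_nonneg fun i _ => ?_
  change 0 ≤ L (s i * P i)
  by_cases hP : P i = 0
  · simp [hP]
  by_cases hs : s i = 0
  · simp [hs]
  have h3 : (s i * P i).totalDegree ≤ d := h2 i
  rw [totalDegree_mul_of_isDomain hs hP] at h3
  obtain ⟨r, g, hg⟩ := h1 i
  have h4 : ∀ j, g j ∈ W ⟨i, hP, by omega⟩ := fun j => by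
    have := aux_sos_deg g (d - (P i).totalDegree) (by rw [← hg]; omega) j
    exact (mem_restrictTotalDegree (Fin n) _ _).2 (by dsimp only; omega)
  rw [hg, Finset.sum_mul, map_sum]
  refine Finset.sum_nonneg fun j _ => ?_
  have h5 := hf _ ⟨g j, h4 j⟩
  rw [← hL', hBv] at h5
  rw [sq]
  exact h5

lemma aux_aeval (x : Fin n → ℝ) (q : MvPolynomial (Fin n) ℝ) : aeval x q = eval x q := by
  rw [← coe_aeval_eq_eval]; rfl

lemma aux_affine {l : MvPolynomial (Fin n) ℝ} (hl : l.totalDegree ≤ 1)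
    (L : MvPolynomial (Fin n) ℝ →ₗ[ℝ] ℝ) (h1 : L 1 = 1) :
    L l = eval (fun i => L (X i)) l := by
  conv_lhs => rw [l.as_sum]
  conv_rhs => rw [l.as_sum]
  rw [map_sum, map_sum]
  refine Finset.sum_congr rfl fun s hs => ?_
  have hs1 : s.degree ≤ 1 := (le_totalDegree hs).trans hl
  have hmon : ∀ c : ℝ, monomial s c = c • monomial s (1 : ℝ) := fun c => by simp [smul_monomial]
  rw [hmon, map_smul, smul_eval, smul_eq_mul]
  congr 1
  rcases Nat.le_one_iff_eq_zero_or_eq_one.1 hs1 with h | h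
  · rw [Finsupp.degree_eq_zero_iff] at h
    subst h
    change L 1 = eval _ 1
    simp [h1]
  · obtain ⟨i, rfl⟩ : ∃ i, s = Finsupp.single i 1 := by
      have hne : s ≠ 0 := by rintro rfl; simp at h
      obtain ⟨i, hi⟩ := Finsupp.ne_iff.1 hne
      rw [Finsupp.coe_zero, Pi.zero_apply] at hi
      refine ⟨i, ?_⟩
      have hle : Finsupp.single i 1 ≤ s := Finsupp.single_le_iff.2 (Nat.one_le_iff_ne_zero.2 hi)
      obtain ⟨t, rfl⟩ := exists_add_of_le hle
      have ht : t.degree = 0 := by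
        rw [map_add, Finsupp.degree_single] at h
        omega
      rw [(Finsupp.degree_eq_zero_iff t).1 ht, add_zero]
    change L (X i) = eval _ (X i)
    simp

lemma aux_eval_comb {l : MvPolynomial (Fin n) ℝ} (hl : l.totalDegree ≤ 1)
    (x y : Fin n → ℝ) (a b : ℝ) (hab : a + b = 1) :
    eval (a • x + b • y) l = a * eval x l + b * eval y l := by
  have := aux_affine hl (a • (aeval x).toLinearMap + b • (aeval y).toLinearMap) (by simp [hab])
  simp only [LinearMap.add_apply, LinearMap.smul_apply, AlgHom.toLinearMap_apply, aeval_X,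
    smul_eq_mul] at this
  rw [aux_aeval, aux_aeval] at this
  exact this.symm
end

/-- If `S = S(p₁,…,p_m)` has non-empty interior then, for every `d`, the
following are equivalent: (1) `conv(S) ⊆ S(p)_d ⊆ closure(conv(S))`; (2) every
affine-linear polynomial `ℓ` with `ℓ ≥ 0` on `S` lies in `QM(p)_d`. -/
theorem lasserre_exact_iff_linear_in_QM {n m : ℕ}
    (p : Fin m → MvPolynomial (Fin n) ℝ)
    (hint : (interior (basicClosedSet p)).Nonempty) (d : ℕ) :
    (convexHull ℝ (basicClosedSet p) ⊆ lasserre p d ∧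
        lasserre p d ⊆ closure (convexHull ℝ (basicClosedSet p))) ↔
      (∀ l : MvPolynomial (Fin n) ℝ, l.totalDegree ≤ 1 →
        (∀ x ∈ basicClosedSet p, 0 ≤ eval x l) → l ∈ QM p d) := by
  constructor
  · rintro ⟨-, hsub⟩ l hl hnn
    by_contra hcon
    obtain ⟨L, hL, hLl⟩ := aux_QM_sep hint l hcon
    obtain ⟨x0, hx0⟩ := hint
    have hx0 := interior_subset hx0
    have hL1 : 0 ≤ L 1 := hL 1 aux_QM_one
    have hl0 := hnn x0 hx0
    obtain ⟨ε, hε, hεl⟩ : ∃ ε : ℝ, 0 < ε ∧ L l + ε * eval x0 l < 0 := by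
      refine ⟨-L l / (eval x0 l + 1) / 2, by have := neg_pos.2 hLl; positivity, ?_⟩
      have h1 : -L l / (eval x0 l + 1) / 2 * eval x0 l ≤ -L l / 2 := by
        rw [div_div, div_mul_eq_mul_div, div_le_div_iff₀ (by positivity) (by positivity)]
        nlinarith
      linarith
    let c : ℝ := (L 1 + ε)⁻¹
    have hc : 0 < c := by positivity
    let L' : MvPolynomial (Fin n) ℝ →ₗ[ℝ] ℝ := c • (L + ε • (aeval x0).toLinearMap)
    have hL' : ∀ q, L' q = c * (L q + ε * eval x0 q) := fun q => by
      simp [L', aux_aeval, mul_add]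
    have h1 : L' 1 = 1 := by
      rw [hL', (eval x0).map_one, mul_one]
      exact inv_mul_cancel₀ (by positivity)
    have hmem : (fun i => L' (X i)) ∈ lasserre p d := by
      refine ⟨L', fun q hq => ?_, h1, fun i => rfl⟩
      rw [hL']
      have := hL q hq
      have := aux_QM_eval hq hx0
      positivity
    have hcl := hsub hmem
    have hconv : Convex ℝ {x | 0 ≤ eval x l} := by
      intro x hx y hy a b ha hb hab
      simp only [Set.mem_ofPred_eq] at *
      rw [aux_eval_comb hl x y a b hab]
      positivity
    have hclosed : IsClosed {x | 0 ≤ eval x l} :=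
      isClosed_le continuous_const (MvPolynomial.continuous_eval l)
    have h2 : 0 ≤ eval (fun i => L' (X i)) l :=
      closure_minimal (convexHull_min hnn hconv) hclosed hcl
    rw [← aux_affine hl L' h1, hL'] at h2
    nlinarith
  · intro h
    constructor
    · apply convexHull_min
      · intro x hx
        refine ⟨(aeval x).toLinearMap, fun q hq => ?_, by simp, by simp⟩
        have := aux_QM_eval hq hx
        simpa [aux_aeval] using this
      · rintro x ⟨L, hL, hL1, hLx⟩ y ⟨M, hM, hM1, hMx⟩ a b ha hb hab
        refine ⟨a • L + b • M, fun q hq => ?_, by simp [hL1, hM1, hab], fun i => by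
          simp [hLx, hMx]⟩
        have := hL q hq
        have := hM q hq
        simp only [LinearMap.add_apply, LinearMap.smul_apply, smul_eq_mul]
        positivity
    · rintro x ⟨L, hL, hL1, hLx⟩
      by_contra hcon
      obtain ⟨f, u, hf, hu⟩ := geometric_hahn_banach_closed_point
        (convex_convexHull ℝ (basicClosedSet p)).closure isClosed_closure hcon
      let l : MvPolynomial (Fin n) ℝ := C u - ∑ i, C (f (Pi.single i 1)) * X i
      have hle : ∀ y, eval y l = u - f y := by
        intro y
        have : f y = ∑ i, y i * f (Pi.single i 1) := by
          conv_lhs => rw [pi_eq_sum_univ' y]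
          rw [map_sum]
          refine Finset.sum_congr rfl fun i _ => ?_
          rw [map_smul, smul_eq_mul]
        simp [l, this, mul_comm]
      have hld : l.totalDegree ≤ 1 := by
        refine (totalDegree_sub _ _).trans (max_le (by simp) ?_)
        refine totalDegree_finsetSum_le fun i _ => ?_
        exact (totalDegree_mul _ _).trans (by simp)
      have hlQ := h l hld fun y hy => by
        rw [hle]
        have := hf y (subset_closure (subset_convexHull ℝ _ hy))
        linarith
      have h3 := hL l hlQ
      rw [aux_affine hld L hL1, ← (funext hLx : x = fun i => L (X i)), hle] at h3
      linarith
end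

section
/- Let A(t) = A_0 + t_1 A_1 + ⋯ + t_n A_n be a linear matrix polynomial of dimension k and S = S(A) its spectrahedron. For every linear subspace U of ℝ^k, the set F_U = {x ∈ S | U ⊆ ker(A(x))} is either empty or a face of S, and conversely every face of S equals F_U for some linear subspace U of ℝ^k. -/
open MvPolynomial

/-- The linear matrix polynomial `A(x) = A₀ + x₁A₁ + ⋯ + xₙAₙ` evaluated at `x`. -/
def matPoly {n k : ℕ} (A0 : Matrix (Fin k) (Fin k) ℝ) (A : Fin n → Matrix (Fin k) (Fin k) ℝ)
    (x : Fin n → ℝ) : Matrix (Fin k) (Fin k) ℝ :=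
  A0 + ∑ i, x i • A i

/-- The spectrahedron `S(A) = {x ∈ ℝⁿ | A(x) ⪰ 0}`. -/
def spectrahedron {n k : ℕ} (A0 : Matrix (Fin k) (Fin k) ℝ)
    (A : Fin n → Matrix (Fin k) (Fin k) ℝ) : Set (Fin n → ℝ) :=
  {x | (matPoly A0 A x).PosSemidef}

theorem aux_factor {k : ℕ} (f g : (Fin k → ℝ) →ₗ[ℝ] (Fin k → ℝ))
    (h : ∀ v, f v = 0 → g v = 0) : ∃ M : (Fin k → ℝ) →ₗ[ℝ] (Fin k → ℝ), ∀ v, g v = M (f v) := by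
  obtain ⟨s, hs⟩ := LinearMap.exists_rightInverse_of_surjective f.rangeRestrict
    (LinearMap.range_rangeRestrict f)
  obtain ⟨M, hM⟩ := LinearMap.exists_extend (g.comp s)
  refine ⟨M, fun v => ?_⟩
  have h1 : M (f v) = g (s (f.rangeRestrict v)) := by
    have := LinearMap.congr_fun hM (f.rangeRestrict v)
    simpa using this
  have h2 : f (s (f.rangeRestrict v)) = f v := by
    have := LinearMap.congr_fun hs (f.rangeRestrict v)
    simpa using congrArg Subtype.val this
  have h3 := h (v - s (f.rangeRestrict v)) (by rw [map_sub, h2, sub_self])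
  rw [map_sub, sub_eq_zero] at h3
  rw [h1, h3]

theorem aux_bound {k : ℕ} (M : Matrix (Fin k) (Fin k) ℝ) :
    ∃ C : ℝ, 0 ≤ C ∧ ∀ v : Fin k → ℝ, (M.mulVec v) ⬝ᵥ (M.mulVec v) ≤ C * (v ⬝ᵥ v) := by
  refine ⟨∑ i, ∑ j, M i j ^ 2, by positivity, fun v => ?_⟩
  rw [Finset.sum_mul]
  refine Finset.sum_le_sum fun i _ => ?_
  have := Finset.sum_mul_sq_le_sq_mul_sq Finset.univ (M i) v
  simpa [Matrix.mulVec, dotProduct, pow_two] using this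

open scoped MatrixOrder Matrix.Norms.L2Operator in
theorem aux_sqrt {k : ℕ} {P : Matrix (Fin k) (Fin k) ℝ} (hP : P.PosSemidef) :
    ∃ B : Matrix (Fin k) (Fin k) ℝ, ∀ v, v ⬝ᵥ P.mulVec v = B.mulVec v ⬝ᵥ B.mulVec v := by
  obtain ⟨B, hB⟩ := CStarAlgebra.nonneg_iff_eq_star_mul_self.mp hP.nonneg
  refine ⟨B, fun v => ?_⟩
  rw [hB, Matrix.star_eq_conjTranspose, ← Matrix.mulVec_mulVec, Matrix.dotProduct_mulVec,
    Matrix.vecMul_conjTranspose]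
  simp

theorem aux_zero {k : ℕ} {P : Matrix (Fin k) (Fin k) ℝ} (hP : P.PosSemidef) (v : Fin k → ℝ) :
    v ⬝ᵥ P.mulVec v = 0 ↔ P.mulVec v = 0 := by
  simpa using hP.dotProduct_mulVec_zero_iff v

theorem aux_nonneg {k : ℕ} {P : Matrix (Fin k) (Fin k) ℝ} (hP : P.PosSemidef) (v : Fin k → ℝ) :
    0 ≤ v ⬝ᵥ P.mulVec v := by
  simpa using hP.dotProduct_mulVec_nonneg v

theorem aux_dom {k : ℕ} {P Q : Matrix (Fin k) (Fin k) ℝ} (hP : P.PosSemidef) (hQ : Q.PosSemidef)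
    (h : ∀ v, P.mulVec v = 0 → Q.mulVec v = 0) :
    ∃ C : ℝ, 0 ≤ C ∧ ∀ v, v ⬝ᵥ Q.mulVec v ≤ C * (v ⬝ᵥ P.mulVec v) := by
  obtain ⟨B, hB⟩ := aux_sqrt hP
  obtain ⟨D, hD⟩ := aux_sqrt hQ
  obtain ⟨M, hM⟩ := aux_factor B.mulVecLin D.mulVecLin (by
    intro v hv
    have hv : B.mulVec v = 0 := hv
    have h1 : v ⬝ᵥ P.mulVec v = 0 := by rw [hB, hv]; simp
    have h2 := h v ((aux_zero hP v).1 h1)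
    have h3 := hD v
    rw [h2, dotProduct_zero] at h3
    exact dotProduct_self_eq_zero.1 h3.symm)
  obtain ⟨C, hC, hb⟩ := aux_bound (LinearMap.toMatrix' M)
  refine ⟨C, hC, fun v => ?_⟩
  have := hb (B.mulVec v)
  have e : D.mulVec v = M (B.mulVec v) := hM v
  rw [LinearMap.toMatrix'_mulVec] at this
  rw [hB, hD, e]
  exact this

theorem aux_comb {n k : ℕ} (A0 : Matrix (Fin k) (Fin k) ℝ) (A : Fin n → Matrix (Fin k) (Fin k) ℝ)
    (x y : Fin n → ℝ) (a b : ℝ) (hab : a + b = 1) :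
    matPoly A0 A (a • x + b • y) = a • matPoly A0 A x + b • matPoly A0 A y := by
  simp only [matPoly, smul_add, Finset.smul_sum, Pi.add_apply, Pi.smul_apply, smul_eq_mul,
    add_smul, Finset.sum_add_distrib, mul_smul]
  have : A0 = a • A0 + b • A0 := by rw [← add_smul, hab, one_smul]
  nth_rewrite 1 [this]
  abel

theorem aux_ker {k : ℕ} {P Q : Matrix (Fin k) (Fin k) ℝ} (hP : P.PosSemidef) (hQ : Q.PosSemidef)
    {a b : ℝ} (ha : 0 < a) (hb : 0 < b) {v : Fin k → ℝ} (h : (a • P + b • Q).mulVec v = 0) :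
    P.mulVec v = 0 ∧ Q.mulVec v = 0 := by
  have h1 : v ⬝ᵥ (a • P + b • Q).mulVec v = 0 := by rw [h, dotProduct_zero]
  rw [Matrix.add_mulVec, Matrix.smul_mulVec, Matrix.smul_mulVec, dotProduct_add, dotProduct_smul,
    dotProduct_smul, smul_eq_mul, smul_eq_mul] at h1
  have p := aux_nonneg hP v
  have q := aux_nonneg hQ v
  have p' := mul_nonneg ha.le p
  have q' := mul_nonneg hb.le q
  rw [← aux_zero hP, ← aux_zero hQ]
  constructor
  · have : a * (v ⬝ᵥ P.mulVec v) = 0 := by linarith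
    simpa [ha.ne'] using this
  · have : b * (v ⬝ᵥ Q.mulVec v) = 0 := by linarith
    simpa [hb.ne'] using this

/-- **Ramana–Goldman.** For every linear subspace `U` of `ℝᵏ` the set
`F_U = {x ∈ S | U ⊆ ker A(x)}` is empty or a face of the spectrahedron `S = S(A)`, and
every face of `S` is of this form. -/
theorem faces_of_spectrahedron {n k : ℕ}
    (A0 : Matrix (Fin k) (Fin k) ℝ) (A : Fin n → Matrix (Fin k) (Fin k) ℝ)
    (hA0 : A0.IsSymm) (hA : ∀ i, (A i).IsSymm) (S : Set (Fin n → ℝ))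
    (hS : S = spectrahedron A0 A) :
    (∀ U : Submodule ℝ (Fin k → ℝ),
        {x ∈ S | ∀ v ∈ U, (matPoly A0 A x).mulVec v = 0} = ∅ ∨
        IsFaceOf S {x ∈ S | ∀ v ∈ U, (matPoly A0 A x).mulVec v = 0}) ∧
    (∀ F : Set (Fin n → ℝ), IsFaceOf S F →
        ∃ U : Submodule ℝ (Fin k → ℝ),
          F = {x ∈ S | ∀ v ∈ U, (matPoly A0 A x).mulVec v = 0}) := by
  subst hS
  constructor
  · intro U
    rcases Set.eq_empty_or_nonempty
      {x ∈ spectrahedron A0 A | ∀ v ∈ U, (matPoly A0 A x).mulVec v = 0} with h | h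
    · exact Or.inl h
    refine Or.inr ⟨h, ?_, fun x hx => hx.1, ?_⟩
    · rintro x ⟨hx, hx'⟩ y ⟨hy, hy'⟩ a b ha hb hab
      refine ⟨?_, fun v hv => ?_⟩
      · change (matPoly A0 A _).PosSemidef
        rw [aux_comb _ _ _ _ _ _ hab]
        exact (Matrix.PosSemidef.smul hx ha).add (Matrix.PosSemidef.smul hy hb)
      · rw [aux_comb _ _ _ _ _ _ hab, Matrix.add_mulVec, Matrix.smul_mulVec, Matrix.smul_mulVec,
          hx' v hv, hy' v hv]
        simp
    · rintro x hx y hy l hl0 hl1 ⟨_, hz⟩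
      have key : ∀ v ∈ U, (matPoly A0 A x).mulVec v = 0 ∧ (matPoly A0 A y).mulVec v = 0 := by
        intro v hv
        have := hz v hv
        rw [aux_comb _ _ _ _ _ _ (by ring)] at this
        exact aux_ker hx hy hl0 (by linarith) this
      exact ⟨⟨hx, fun v hv => (key v hv).1⟩, ⟨hy, fun v hv => (key v hv).2⟩⟩
  · rintro F ⟨hne, hconv, hsub, hface⟩
    let d : (Fin n → ℝ) → ℕ := fun x => Module.finrank ℝ (LinearMap.ker (matPoly A0 A x).mulVecLin)
    obtain ⟨x0, hx0, hmin⟩ : ∃ x0 ∈ F, ∀ x ∈ F, d x0 ≤ d x := by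
      obtain ⟨m, hm, hm'⟩ := (measure d).wf.has_min F hne
      exact ⟨m, hm, fun x hx => not_lt.1 (hm' x hx)⟩
    have hp0 : (matPoly A0 A x0).PosSemidef := hsub hx0
    refine ⟨LinearMap.ker (matPoly A0 A x0).mulVecLin, ?_⟩
    ext x
    constructor
    · intro hx
      have hp : (matPoly A0 A x).PosSemidef := hsub hx
      have hz : (1/2 : ℝ) • x0 + (1/2 : ℝ) • x ∈ F :=
        hconv hx0 hx (by norm_num) (by norm_num) (by norm_num)
      have hk : ∀ v, (matPoly A0 A ((1/2 : ℝ) • x0 + (1/2 : ℝ) • x)).mulVec v = 0 →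
          (matPoly A0 A x0).mulVec v = 0 ∧ (matPoly A0 A x).mulVec v = 0 := by
        intro v hv
        rw [aux_comb _ _ _ _ _ _ (by norm_num)] at hv
        exact aux_ker hp0 hp (by norm_num) (by norm_num) hv
      have hle : LinearMap.ker (matPoly A0 A ((1/2 : ℝ) • x0 + (1/2 : ℝ) • x)).mulVecLin ≤
          LinearMap.ker (matPoly A0 A x0).mulVecLin := fun v hv => (hk v hv).1
      have heq := Submodule.eq_of_le_of_finrank_le hle (hmin _ hz)
      refine ⟨hsub hx, fun v hv => ?_⟩
      rw [← heq] at hv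
      exact (hk v hv).2
    · rintro ⟨hx, hker⟩
      have hp : (matPoly A0 A x).PosSemidef := hx
      obtain ⟨C, hC, hdom⟩ := aux_dom hp0 hp (fun v hv => hker v hv)
      -- y = (1+e) x0 - e x with e = 1/(C+1)
      have hC1 : 0 < C + 1 := by linarith
      set e : ℝ := 1 / (C + 1) with he
      have he0 : 0 < e := by positivity
      have heC : e * C ≤ 1 := by
        rw [he, one_div_mul_eq_div, div_le_one hC1]; linarith
      have hy : (1 + e) • x0 + (-e) • x ∈ spectrahedron A0 A := by
        change (matPoly A0 A _).PosSemidef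
        rw [aux_comb _ _ _ _ _ _ (by ring)]
        refine Matrix.PosSemidef.of_dotProduct_mulVec_nonneg ?_ fun v => ?_
        · have h1 := hp0.isHermitian
          have h2 := hp.isHermitian
          unfold Matrix.IsHermitian at *
          rw [Matrix.conjTranspose_add, Matrix.conjTranspose_smul, Matrix.conjTranspose_smul, h1, h2]
          simp
        · have h1 := hdom v
          have h2 := aux_nonneg hp0 v
          simp only [star_trivial, Matrix.add_mulVec, Matrix.smul_mulVec, dotProduct_add,
            dotProduct_smul, smul_eq_mul]
          have h3 := mul_le_mul_of_nonneg_left h1 he0.le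
          have h4 := mul_le_mul_of_nonneg_right heC h2
          nlinarith [mul_nonneg he0.le h2]
      have h1e : 0 < 1 + e := by linarith
      refine (hface x hx _ hy (e / (1 + e)) (by positivity)
        (by rw [div_lt_one h1e]; linarith) ?_).1
      convert hx0 using 1
      ext i
      simp only [Pi.add_apply, Pi.smul_apply, smul_eq_mul]
      field_simp
      ring
end

section
/- Every face of a closed hyperbolicity cone is exposed: if P is a homogeneous real polynomial in m variables that is hyperbolic with respect to e ∈ ℝ^m \ {0}, and C is the closed hyperbolicity cone of P, then every face of C is an exposed face of C. -/
open MvPolynomial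

/-- The univariate polynomial `s ↦ P(x - s·e)`. -/
noncomputable def lineEvalSub {m : ℕ} (P : MvPolynomial (Fin m) ℝ) (x e : Fin m → ℝ) :
    Polynomial ℝ :=
  MvPolynomial.aeval (fun i => Polynomial.C (x i) - Polynomial.C (e i) * Polynomial.X) P

/-- `P` is hyperbolic with respect to `e`: `P(e) > 0` and for every `x ∈ ℝᵐ` all complex
zeros of the univariate polynomial `s ↦ P(x - s·e)` are real. -/
def IsHyperbolicWrt {m : ℕ} (P : MvPolynomial (Fin m) ℝ) (e : Fin m → ℝ) : Prop :=
  0 < eval e P ∧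
    ∀ x : Fin m → ℝ, ∀ z : ℂ, Polynomial.aeval z (lineEvalSub P x e) = 0 → z.im = 0


noncomputable def hfLine {k : Type*} [Field k] {m : ℕ} (Q : MvPolynomial (Fin m) k)
    (v a : Fin m → k) : Polynomial k :=
  MvPolynomial.aeval (fun i => Polynomial.C (v i) + Polynomial.C (a i) * Polynomial.X) Q

theorem hf_eval_smul {k : Type*} [Field k] {m d : ℕ} {Q : MvPolynomial (Fin m) k}
    (hQ : Q.IsHomogeneous d) (c : k) (v : Fin m → k) :
    eval (c • v) Q = c ^ d * eval v Q := by
  rw [eval_eq', eval_eq', Finset.mul_sum]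
  refine Finset.sum_congr rfl fun i hi => ?_
  have := hQ (mem_support_iff.mp hi)
  rw [Finsupp.weight_apply, Finsupp.sum_fintype _ _ (by simp)] at this
  simp only [Pi.one_apply, smul_eq_mul, mul_one] at this
  simp only [Pi.smul_apply, smul_eq_mul, mul_pow, Finset.prod_mul_distrib,
    Finset.prod_pow_eq_pow_sum, this]
  ring

theorem hf_eval_line {k : Type*} [Field k] {m : ℕ} (Q : MvPolynomial (Fin m) k)
    (v a : Fin m → k) (t : k) : (hfLine Q v a).eval t = eval (v + t • a) Q := by
  unfold hfLine
  induction Q using MvPolynomial.induction_on with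
  | C c => simp
  | add p q hp hq => simp [hp, hq]
  | mul_X p i hp =>
    simp only [map_mul, Polynomial.eval_mul, hp, aeval_X, eval_X]
    congr 1
    simp
    ring

theorem hf_natDegree_line {k : Type*} [Field k] {m d : ℕ} {Q : MvPolynomial (Fin m) k}
    (hQ : Q.IsHomogeneous d) (v a : Fin m → k) : (hfLine Q v a).natDegree ≤ d := by
  have := MvPolynomial.aeval_natDegree_le (m := d) (n := 1) Q hQ.totalDegree_le
    (fun i => Polynomial.C (v i) + Polynomial.C (a i) * Polynomial.X) (fun i => by
      rw [add_comm]; exact Polynomial.natDegree_linear_le)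
  simpa [hfLine] using this

theorem hf_coeff_line {k : Type*} [Field k] [Infinite k] {m d : ℕ} {Q : MvPolynomial (Fin m) k}
    (hQ : Q.IsHomogeneous d) (v a : Fin m → k) : (hfLine Q v a).coeff d = eval a Q := by
  have key : Polynomial.X * Polynomial.reflect d (hfLine Q v a) =
      Polynomial.X * hfLine Q a v := by
    apply Polynomial.funext
    intro t
    by_cases ht : t = 0
    · simp [ht]
    · simp only [Polynomial.eval_mul, Polynomial.eval_X, hf_eval_line]
      congr 1
      let _ := invertibleOfNonzero (inv_ne_zero ht)
      have h := Polynomial.eval₂_reflect_mul_pow (RingHom.id k) t⁻¹ d (hfLine Q v a)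
        (hf_natDegree_line hQ v a)
      rw [← Polynomial.eval, ← Polynomial.eval, hf_eval_line, invOf_eq_inv, inv_inv] at h
      have h2 : a + t • v = t • (v + t⁻¹ • a) := by
        rw [smul_add, smul_smul, mul_inv_cancel₀ ht, one_smul, add_comm]
      rw [h2, hf_eval_smul hQ, ← h, inv_pow]
      field_simp
  have key2 := mul_left_cancel₀ Polynomial.X_ne_zero key
  have h0 := congrArg (Polynomial.eval 0) key2
  rw [hf_eval_line] at h0
  simp only [zero_smul, add_zero] at h0
  rw [← h0, ← Polynomial.coeff_zero_eq_eval_zero, Polynomial.coeff_reflect]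
  simp [Polynomial.revAt_le]

theorem hf_close {m d : ℕ} {Q : MvPolynomial (Fin m) ℂ}
    (hQ : Q.IsHomogeneous d) (v a : Fin m → ℂ) (s₀ : ℂ) (ε : ℝ) (hε : 0 < ε)
    (h : ‖eval (v + s₀ • a) Q‖ < ‖eval a Q‖ * ε ^ d) :
    ∃ s : ℂ, ‖s - s₀‖ < ε ∧ eval (v + s • a) Q = 0 := by
  have ha : eval a Q ≠ 0 := by
    intro h0
    rw [h0, norm_zero, zero_mul] at h
    exact absurd h (not_lt.mpr (norm_nonneg _))
  set q := hfLine Q v a with hq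
  have hc := hf_coeff_line hQ v a
  have hd : q.natDegree = d :=
    le_antisymm (hf_natDegree_line hQ v a)
      (Polynomial.le_natDegree_of_ne_zero (by rw [hc]; exact ha))
  have hl : q.leadingCoeff = eval a Q := by rw [Polynomial.leadingCoeff, hd, hc]
  have hs : q.Splits := IsAlgClosed.splits q
  have hq0 : q ≠ 0 := by
    intro h0; rw [h0] at hl; simp at hl; exact ha hl.symm
  by_contra hcon
  push Not at hcon
  have hroot : ∀ r ∈ q.roots, ε ≤ ‖s₀ - r‖ := by
    intro r hr
    by_contra hlt
    push Not at hlt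
    refine hcon r (by rwa [norm_sub_rev]) ?_
    rw [← hf_eval_line]
    exact (Polynomial.mem_roots hq0).mp hr
  have hev := hs.eval_eq_prod_roots s₀
  have hprod : ∀ M : Multiset ℂ, (∀ r ∈ M, ε ≤ ‖s₀ - r‖) →
      ε ^ M.card ≤ ‖(M.map (fun r => s₀ - r)).prod‖ := by
    intro M
    induction M using Multiset.induction_on with
    | empty => simp
    | cons r M ih =>
      intro hM
      simp only [Multiset.card_cons, Multiset.map_cons, Multiset.prod_cons, norm_mul, pow_succ']
      exact mul_le_mul (hM r (by simp)) (ih fun r' hr' => hM r' (by simp [hr'])) (by positivity)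
        (by positivity)
  have h1 := hprod q.roots hroot
  rw [← hs.natDegree_eq_card_roots, hd] at h1
  rw [hf_eval_line] at hev
  rw [hev, hl, norm_mul] at h
  exact absurd h (not_lt.mpr (mul_le_mul_of_nonneg_left h1 (norm_nonneg _)))

theorem hf_deriv_line {m : ℕ} (Q : MvPolynomial (Fin m) ℝ) (v a : Fin m → ℝ) :
    Polynomial.derivative (hfLine Q v a) =
      ∑ i, Polynomial.C (a i) * hfLine (pderiv i Q) v a := by
  unfold hfLine
  induction Q using MvPolynomial.induction_on with
  | C c => simp
  | add p q hp hq => simp [hp, hq, mul_add, Finset.sum_add_distrib]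
  | mul_X p j hp =>
    have h1 : Polynomial.derivative (Polynomial.C (v j) + Polynomial.C (a j) * Polynomial.X) =
        Polynomial.C (a j) := by simp
    rw [map_mul, aeval_X, Polynomial.derivative_mul, hp, h1]
    have h2 : ∀ i, Polynomial.C (a i) * (aeval fun i => Polynomial.C (v i) +
          Polynomial.C (a i) * Polynomial.X) ((pderiv i) (p * X j)) =
        Polynomial.C (a i) * (aeval fun i => Polynomial.C (v i) +
          Polynomial.C (a i) * Polynomial.X) ((pderiv i) p) *
          (Polynomial.C (v j) + Polynomial.C (a j) * Polynomial.X) +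
        (if i = j then (aeval fun i => Polynomial.C (v i) +
          Polynomial.C (a i) * Polynomial.X) p * Polynomial.C (a j) else 0) := by
      intro i
      rw [Derivation.leibniz, pderiv_X]
      by_cases hij : i = j
      · subst hij
        simp only [smul_eq_mul, map_add, map_mul, aeval_X, Pi.single_eq_same, map_one, if_true]
        ring
      · have hji : j ≠ i := fun h => hij h.symm
        simp only [smul_eq_mul, map_add, map_mul, aeval_X, Pi.single_eq_of_ne hji, map_zero,
          if_neg hij]
        ring
    rw [Finset.sum_congr rfl fun i _ => h2 i, Finset.sum_add_distrib, Finset.sum_mul]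
    simp

theorem hf_splits (g : Polynomial ℝ) (h : ∀ z : ℂ, Polynomial.aeval z g = 0 → z.im = 0) :
    g.Splits := by
  by_cases hg : g = 0
  · rw [hg]; exact Polynomial.Splits.zero
  refine Polynomial.Splits.of_splits_map (algebraMap ℝ ℂ) (IsAlgClosed.splits _) ?_
  intro z hz
  rw [Polynomial.mem_roots_map hg, ← Polynomial.aeval_def] at hz
  exact ⟨z.re, Complex.ext (by simp) (by simp [h z hz])⟩

theorem hf_coeff_nonneg (g : Polynomial ℝ) (hs : g.Splits) (h0 : 0 < g.eval 0)
    (hr : ∀ t : ℝ, 0 ≤ t → g.eval t ≠ 0) (n : ℕ) : 0 ≤ g.coeff n := by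
  have hg : g ≠ 0 := by rintro rfl; simp at h0
  have hneg : ∀ r ∈ g.roots, r < 0 := by
    intro r hr'
    by_contra hc
    exact hr r (not_lt.mp hc) ((Polynomial.mem_roots hg).mp hr')
  have hprod : ∀ M : Multiset ℝ, (∀ r ∈ M, r < 0) →
      (∀ n, 0 ≤ ((M.map (fun r => Polynomial.X - Polynomial.C r)).prod).coeff n) ∧
      0 < ((M.map (fun r => Polynomial.X - Polynomial.C r)).prod).eval 0 := by
    intro M
    induction M using Multiset.induction_on with
    | empty =>
      intro _
      refine ⟨fun n => ?_, by simp⟩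
      simp [Polynomial.coeff_one]; split_ifs <;> norm_num
    | cons r M ih =>
      intro hM
      obtain ⟨h1, h2⟩ := ih fun r' hr' => hM r' (by simp [hr'])
      have hr0 := hM r (by simp)
      simp only [Multiset.map_cons, Multiset.prod_cons]
      constructor
      · intro n
        rw [sub_mul, Polynomial.coeff_sub, Polynomial.coeff_C_mul]
        have : 0 ≤ (Polynomial.X * (M.map (fun r => Polynomial.X - Polynomial.C r)).prod).coeff n := by
          cases n with
          | zero => simp
          | succ n => rw [Polynomial.coeff_X_mul]; exact h1 n
        nlinarith [h1 n]
      · rw [Polynomial.eval_mul]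
        simp only [Polynomial.eval_sub, Polynomial.eval_X, Polynomial.eval_C, zero_sub]
        exact mul_pos (by linarith) h2
  obtain ⟨h1, h2⟩ := hprod g.roots hneg
  have hfac := hs.eq_prod_roots
  have hlc : 0 < g.leadingCoeff := by
    rw [hfac, Polynomial.eval_mul, Polynomial.eval_C] at h0
    exact pos_of_mul_pos_left h0 h2.le
  rw [hfac, Polynomial.coeff_C_mul]
  exact mul_nonneg hlc.le (h1 n)

theorem hf_eval_one_ge (g : Polynomial ℝ) (hc : ∀ n, 0 ≤ g.coeff n) (w : ℝ) (hw : 0 ≤ w) :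
    g.eval 0 + w * g.derivative.eval 0 ≤ g.eval w := by
  have h1 : g.derivative.eval 0 = g.coeff 1 := by
    rw [← Polynomial.coeff_zero_eq_eval_zero, Polynomial.coeff_derivative]; simp
  rw [h1, ← Polynomial.coeff_zero_eq_eval_zero,
    Polynomial.eval_eq_sum_range' (n := g.natDegree + 2) (by omega), Finset.sum_range_succ',
    Finset.sum_range_succ']
  have : 0 ≤ ∑ k ∈ Finset.range g.natDegree, g.coeff (k + 1 + 1) * w ^ (k + 1 + 1) :=
    Finset.sum_nonneg fun i _ => mul_nonneg (hc _) (by positivity)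
  simp only [zero_add, pow_one, pow_zero, mul_one]
  linarith

theorem hf_pos_left (g : Polynomial ℝ) (hs : g.Splits) (h0 : 0 < g.eval 0)
    (hr : ∀ t : ℝ, 0 ≤ t → g.eval t ≠ 0) (M : ℝ) 
    (hM : g.derivative.eval 0 ≤ M * g.eval 0) (w : ℝ) (hw : 0 ≤ w) (hwM : w * M < 1) :
    0 < g.eval (-w) := by
  have hg : g ≠ 0 := by rintro rfl; simp at h0
  have hneg : ∀ r ∈ g.roots, r < 0 := by
    intro r hr'
    by_contra hc
    exact hr r (not_lt.mp hc) ((Polynomial.mem_roots hg).mp hr')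
  have hsum := hs.eval_derivative_div_eval_of_ne_zero h0.ne'
  have hle : g.derivative.eval 0 / g.eval 0 ≤ M := by rwa [div_le_iff₀ h0]
  have hnz : ∀ t ∈ Set.Icc (-w) 0, g.eval t ≠ 0 := by
    intro t ht h
    have hmem : t ∈ g.roots := (Polynomial.mem_roots hg).mpr h
    have ht0 := hneg t hmem
    have h1 : 1 / (0 - t) ≤ (g.roots.map fun z => 1 / (0 - z)).sum := by
      apply Multiset.single_le_sum
      · intro y hy
        obtain ⟨z, hz, rfl⟩ := Multiset.mem_map.mp hy
        have := hneg z hz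
        exact div_nonneg zero_le_one (by linarith)
      · exact Multiset.mem_map.mpr ⟨t, hmem, rfl⟩
    rw [← hsum] at h1
    have h2 := h1.trans hle
    rw [div_le_iff₀ (by linarith)] at h2
    have hMp : 0 < M := by
      by_contra hc
      nlinarith
    nlinarith [ht.1]
  by_contra hc
  push Not at hc
  have hcont : ContinuousOn (fun t => g.eval t) (Set.Icc (-w) 0) := g.continuous.continuousOn
  obtain ⟨t, ht, h⟩ := intermediate_value_Icc (by linarith) hcont ⟨hc, h0.le⟩
  exact hnz t ht h

noncomputable def hfPC {m : ℕ} (P : MvPolynomial (Fin m) ℝ) : MvPolynomial (Fin m) ℂ :=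
  map (algebraMap ℝ ℂ) P

def hfcv {m : ℕ} (x : Fin m → ℝ) : Fin m → ℂ := fun i => (x i : ℂ)

theorem hf_eval_cv {m : ℕ} (P : MvPolynomial (Fin m) ℝ) (x : Fin m → ℝ) :
    eval (hfcv x) (hfPC P) = ((eval x P : ℝ) : ℂ) := by
  unfold hfPC hfcv
  rw [eval_map, ← Complex.coe_algebraMap]
  exact (MvPolynomial.eval₂_comp (algebraMap ℝ ℂ) x P).symm

theorem hf_hom_PC {m d : ℕ} {P : MvPolynomial (Fin m) ℝ} (hP : P.IsHomogeneous d) :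
    (hfPC P).IsHomogeneous d := hP.map _

def hfHyp {m : ℕ} (P : MvPolynomial (Fin m) ℝ) (e : Fin m → ℝ) : Prop :=
  0 < eval e P ∧ ∀ (x : Fin m → ℝ) (z : ℂ), eval (hfcv x + z • hfcv e) (hfPC P) = 0 → z.im = 0

def hfL {m : ℕ} (P : MvPolynomial (Fin m) ℝ) (e : Fin m → ℝ) : Set (Fin m → ℝ) :=
  {u | ∀ t : ℝ, 0 ≤ t → 0 < eval (u + t • e) P}

def hfK {m : ℕ} (P : MvPolynomial (Fin m) ℝ) (e : Fin m → ℝ) : Set (Fin m → ℝ) :=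
  {u | ∀ t : ℝ, 0 < t → 0 < eval (u + t • e) P}

theorem hf_aeval_line {m : ℕ} (P : MvPolynomial (Fin m) ℝ) (x y : Fin m → ℝ) (z : ℂ) :
    Polynomial.aeval z (hfLine P x y) = eval (hfcv x + z • hfcv y) (hfPC P) := by
  unfold hfLine hfPC hfcv
  induction P using MvPolynomial.induction_on with
  | C c => simp
  | add p q hp hq => simp [hp, hq]
  | mul_X p i hp =>
    simp only [map_mul, hp, aeval_X, eval_X, map_X]
    congr 1
    simp
    ring

theorem hf_hyp_of {m : ℕ} {P : MvPolynomial (Fin m) ℝ} {e : Fin m → ℝ}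
    (h : IsHyperbolicWrt P e) : hfHyp P e := by
  refine ⟨h.1, fun x z hz => ?_⟩
  have key : ∀ w : ℂ, Polynomial.aeval w (lineEvalSub P x e) =
      eval (hfcv x + (-w) • hfcv e) (hfPC P) := by
    intro w
    unfold lineEvalSub hfPC hfcv
    clear h hz
    induction P using MvPolynomial.induction_on with
    | C c => simp
    | add p q hp hq => simp [hp, hq]
    | mul_X p i hp =>
      simp only [map_mul, hp, aeval_X, eval_X, map_X]
      congr 1
      simp
      ring
  have := h.2 x (-z) (by rw [key, neg_neg, hz])
  simpa using this

section
variable {m d : ℕ} {P : MvPolynomial (Fin m) ℝ}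

theorem hf_mem_L_iff (hP : P.IsHomogeneous d) {e : Fin m → ℝ} (he : 0 < eval e P)
    (u : Fin m → ℝ) :
    u ∈ hfL P e ↔ ∀ θ ∈ Set.Icc (0 : ℝ) 1, 0 < eval ((1 - θ) • u + θ • e) P := by
  constructor
  · intro hu θ hθ
    rcases eq_or_lt_of_le hθ.2 with h1 | h1
    · simpa [h1] using he
    · have h2 : 0 < 1 - θ := by linarith
      have := hu (θ / (1 - θ)) (div_nonneg hθ.1 h2.le)
      have h3 : (1 - θ) • u + θ • e = (1 - θ) • (u + (θ / (1 - θ)) • e) := by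
        rw [smul_add, smul_smul, mul_div_cancel₀ _ h2.ne']
      rw [h3, hf_eval_smul hP]
      positivity
  · intro hu t ht
    have h2 : 0 < 1 + t := by linarith
    have := hu (t / (1 + t)) ⟨by positivity, by rw [div_le_one h2]; linarith⟩
    have h3 : u + t • e = (1 + t) • ((1 - t / (1 + t)) • u + (t / (1 + t)) • e) := by
      rw [smul_add, smul_smul, smul_smul, mul_div_cancel₀ _ h2.ne', mul_sub,
        mul_div_cancel₀ _ h2.ne']
      simp
    rw [h3, hf_eval_smul hP]
    positivity

theorem hf_L_open (hP : P.IsHomogeneous d) {e : Fin m → ℝ} (he : 0 < eval e P) :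
    IsOpen (hfL P e) := by
  rw [isOpen_iff_eventually]
  intro u hu
  have : ∀ᶠ v in nhds u, ∀ θ ∈ Set.Icc (0 : ℝ) 1, 0 < eval ((1 - θ) • v + θ • e) P := by
    apply isCompact_Icc.eventually_forall_of_forall_eventually
    intro θ hθ
    have hc : Continuous (fun z : (Fin m → ℝ) × ℝ => eval ((1 - z.2) • z.1 + z.2 • e) P) :=
      (MvPolynomial.continuous_eval P).comp (by fun_prop)
    exact hc.continuousAt.eventually (lt_mem_nhds ((hf_mem_L_iff hP he u).mp hu θ hθ))
  filter_upwards [this] with v hv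
  exact (hf_mem_L_iff hP he v).mpr hv

theorem hf_e_mem_L (hP : P.IsHomogeneous d) {e : Fin m → ℝ} (he : 0 < eval e P) :
    e ∈ hfL P e := by
  rw [hf_mem_L_iff hP he]
  intro θ _
  rw [← add_smul]
  simpa using he

theorem hf_closure_L_sub (hP : P.IsHomogeneous d) {e : Fin m → ℝ} (he : hfHyp P e) :
    closure (hfL P e) ⊆ hfK P e := by
  intro x hx t ht
  have hc : Continuous (fun u : Fin m → ℝ => eval (u + t • e) P) :=
    (MvPolynomial.continuous_eval P).comp (by fun_prop)
  have hge : 0 ≤ eval (x + t • e) P := by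
    have : closure (hfL P e) ⊆ {u | 0 ≤ eval (u + t • e) P} :=
      closure_minimal (fun u hu => (hu t ht.le).le) (isClosed_le continuous_const hc)
    exact this hx
  refine lt_of_le_of_ne hge fun h0 => ?_
  have hopen : IsOpen {u : Fin m → ℝ | |eval (u + t • e) P| < eval e P * t ^ d} :=
    isOpen_lt (continuous_abs.comp hc) continuous_const
  have hmem : x ∈ {u : Fin m → ℝ | |eval (u + t • e) P| < eval e P * t ^ d} := by
    have := he.1
    simp only [Set.mem_ofPred_eq, ← h0, abs_zero]
    positivity
  obtain ⟨u, hu1, hu2⟩ := mem_closure_iff.mp hx _ hopen hmem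
  have hcv : ∀ r : ℝ, hfcv u + (r : ℂ) • hfcv e = hfcv (u + r • e) := by
    intro r; ext i; simp [hfcv]
  obtain ⟨s, hs1, hs2⟩ := hf_close (hf_hom_PC hP) (hfcv u) (hfcv e) (t : ℂ) t ht (by
    rw [hcv, hf_eval_cv, hf_eval_cv, Complex.norm_real, Complex.norm_real, Real.norm_eq_abs,
      Real.norm_eq_abs, abs_of_pos he.1]
    exact hu1)
  have him := he.2 u s hs2
  have hs : s = (s.re : ℂ) := Complex.ext (by simp) (by simp [him])
  have hre : 0 < s.re := by
    have := (Complex.abs_re_le_norm (s - t)).trans_lt hs1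
    rw [Complex.sub_re, Complex.ofReal_re] at this
    linarith [(abs_lt.mp this).1]
  rw [hs, hcv, hf_eval_cv] at hs2
  have h1 := hu2 s.re hre.le
  rw [Complex.ofReal_eq_zero.mp hs2] at h1
  exact lt_irrefl _ h1

theorem hf_K_eq (hP : P.IsHomogeneous d) {e : Fin m → ℝ} (he : hfHyp P e) :
    closure (hfL P e) = hfK P e := by
  refine (hf_closure_L_sub hP he).antisymm fun x hx => ?_
  have ht : Filter.Tendsto (fun t : ℝ => x + t • e) (nhdsWithin 0 (Set.Ioi 0)) (nhds x) := by
    have : Continuous (fun t : ℝ => x + t • e) := by fun_prop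
    have h := this.tendsto 0
    simp only [zero_smul, add_zero] at h
    exact h.mono_left nhdsWithin_le_nhds
  refine mem_closure_of_tendsto ht ?_
  filter_upwards [self_mem_nhdsWithin] with t ht s hs
  rw [add_assoc, ← add_smul]
  exact hx _ (add_pos_of_pos_of_nonneg ht hs)

theorem hf_L_eq (hP : P.IsHomogeneous d) {e : Fin m → ℝ} (he : hfHyp P e) :
    connectedComponentIn {x | 0 < eval x P} e = hfL P e := by
  apply Set.Subset.antisymm
  · refine isPreconnected_connectedComponentIn.subset_of_closure_inter_subset
      (hf_L_open hP he.1) ⟨e, mem_connectedComponentIn he.1, hf_e_mem_L hP he.1⟩ ?_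
    rintro x ⟨hx1, hx2⟩ t ht
    rcases eq_or_lt_of_le ht with h | h
    · have : 0 < eval x P :=
        connectedComponentIn_subset {x | 0 < eval x P} e hx2
      simpa [← h] using this
    · exact hf_closure_L_sub hP he hx1 t h
  · have hstar : StarConvex ℝ e (hfL P e) := by
      intro u hu a b ha hb hab t ht
      have := (hf_mem_L_iff hP he.1 u).mp hu
      rcases eq_or_lt_of_le hb with h | h
      · have ha1 : a = 1 := by linarith
        rw [← h, ha1, zero_smul, add_zero, one_smul]
        exact hf_e_mem_L hP he.1 t ht
      · have h3 : a • e + b • u + t • e = b • (u + ((a + t) / b) • e) := by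
          rw [smul_add, smul_smul, mul_div_cancel₀ _ h.ne', add_smul]; abel
        rw [h3, hf_eval_smul hP]
        have := hu ((a + t) / b) (by positivity)
        positivity
    refine IsPreconnected.subset_connectedComponentIn ?_ (hf_e_mem_L hP he.1) ?_
    · exact (hstar.isPathConnected (hf_e_mem_L hP he.1)).isConnected.isPreconnected
    · intro u hu
      simpa using hu 0 le_rfl
end

section
variable {m d : ℕ} {P : MvPolynomial (Fin m) ℝ}

theorem hf_garding_aux (hP : P.IsHomogeneous d) {e : Fin m → ℝ} (he : hfHyp P e)
    {a : Fin m → ℝ} (ha : a ∈ hfL P e) (z : Fin m → ℝ) :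
    eval (hfcv z + Complex.I • hfcv a) (hfPC P) ≠ 0 := by
  intro hz
  have hPC := hf_hom_PC hP
  have hcont : Continuous (fun v : Fin m → ℂ => eval v (hfPC P)) :=
    MvPolynomial.continuous_eval _
  have hpa : 0 < eval a P := by simpa using ha 0 le_rfl
  have hA : eval (hfcv a) (hfPC P) ≠ 0 := by
    rw [hf_eval_cv]; exact_mod_cast hpa.ne'
  have hA' : 0 < ‖eval (hfcv a) (hfPC P)‖ := norm_pos_iff.mpr hA
  -- step 1
  obtain ⟨α, hα, hα1⟩ : ∃ α : ℝ, 0 < α ∧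
      ‖eval (hfcv z + ((α : ℂ) * Complex.I) • hfcv e + Complex.I • hfcv a) (hfPC P)‖ <
        ‖eval (hfcv a) (hfPC P)‖ * 1 ^ d := by
    have hc : Continuous (fun α : ℝ =>
        ‖eval (hfcv z + ((α : ℂ) * Complex.I) • hfcv e + Complex.I • hfcv a) (hfPC P)‖) :=
      (hcont.comp (by fun_prop)).norm
    have h0 : ‖eval (hfcv z + (((0 : ℝ) : ℂ) * Complex.I) • hfcv e +
        Complex.I • hfcv a) (hfPC P)‖ < ‖eval (hfcv a) (hfPC P)‖ * 1 ^ d := by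
      simp [hz, hA]
    have h1 := hc.continuousAt.eventually (gt_mem_nhds h0)
    have h2 := (h1.filter_mono (nhdsWithin_le_nhds (s := Set.Ioi 0))).and self_mem_nhdsWithin
    obtain ⟨α, h3, h4⟩ := h2.exists
    exact ⟨α, h4, h3⟩
  obtain ⟨s₁, hs₁, hs₁'⟩ := hf_close hPC _ _ _ 1 one_pos hα1
  have him₁ : 0 < s₁.im := by
    have := (Complex.abs_im_le_norm (s₁ - Complex.I)).trans_lt hs₁
    rw [Complex.sub_im, Complex.I_im] at this
    linarith [(abs_lt.mp this).1]
  -- bound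
  obtain ⟨δ, hδ, hδ'⟩ : ∃ δ > 0, ∀ u : Fin m → ℂ, ‖u - hfcv a‖ < δ → eval u (hfPC P) ≠ 0 := by
    have := hcont.continuousAt.eventually_ne hA
    obtain ⟨δ, hδ, h⟩ := Metric.eventually_nhds_iff.mp this
    exact ⟨δ, hδ, fun u hu => h (by rwa [dist_eq_norm])⟩
  set V : ℝ → (Fin m → ℂ) := fun β => (β : ℂ) • hfcv z + ((α : ℂ) * Complex.I) • hfcv e with hV
  have hVc : Continuous V := by fun_prop
  set R : ℝ := (‖hfcv z‖ + ‖((α : ℂ) * Complex.I) • hfcv e‖) / δ with hR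
  have hbound : ∀ β ∈ Set.Icc (0 : ℝ) 1, ∀ s : ℂ, eval (V β + s • hfcv a) (hfPC P) = 0 →
      ‖s‖ ≤ R := by
    intro β hβ s hs
    by_contra hlt
    push Not at hlt
    have hR0 : 0 ≤ R := by positivity
    have hspos : 0 < ‖s‖ := hR0.trans_lt hlt
    have hs0 : s ≠ 0 := norm_pos_iff.mp hspos
    have h1 : V β + s • hfcv a = s • (s⁻¹ • V β + hfcv a) := by
      rw [smul_add, smul_smul, mul_inv_cancel₀ hs0, one_smul]
    rw [h1, hf_eval_smul hPC] at hs
    refine hδ' (s⁻¹ • V β + hfcv a) ?_ ((mul_eq_zero.mp hs).resolve_left (pow_ne_zero _ hs0))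
    rw [add_sub_cancel_right, norm_smul, norm_inv]
    have h2 : ‖V β‖ ≤ ‖hfcv z‖ + ‖((α : ℂ) * Complex.I) • hfcv e‖ := by
      refine (norm_add_le _ _).trans ?_
      gcongr
      rw [norm_smul, Complex.norm_real, Real.norm_eq_abs, abs_of_nonneg hβ.1]
      exact mul_le_of_le_one_left (norm_nonneg _) hβ.2
    rw [inv_mul_lt_iff₀ hspos]
    rw [hR, div_lt_iff₀ hδ] at hlt
    exact h2.trans_lt hlt
  set S : Set (ℝ × ℂ) := (Set.Icc (0 : ℝ) 1 ×ˢ Metric.closedBall (0 : ℂ) R) ∩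
    ({q | 0 ≤ q.2.im} ∩ {q | eval (V q.1 + q.2 • hfcv a) (hfPC P) = 0}) with hS
  have hScomp : IsCompact S := by
    refine (isCompact_Icc.prod (isCompact_closedBall _ _)).inter_right
      (IsClosed.inter ?_ ?_)
    · exact isClosed_le continuous_const (Complex.continuous_im.comp continuous_snd)
    · refine isClosed_eq (hcont.comp ?_) continuous_const
      exact (hVc.comp continuous_fst).add (by fun_prop)
  have hSmem : ∀ β ∈ Set.Icc (0 : ℝ) 1, ∀ s : ℂ, 0 ≤ s.im →
      eval (V β + s • hfcv a) (hfPC P) = 0 → β ∈ Prod.fst '' S := by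
    intro β hβ s hs h
    exact ⟨(β, s), ⟨⟨hβ, by simpa using hbound β hβ s h⟩, hs, h⟩, rfl⟩
  have hne : (Prod.fst '' S).Nonempty :=
    ⟨1, hSmem 1 ⟨zero_le_one, le_rfl⟩ s₁ him₁.le (by simpa [hV] using hs₁')⟩
  obtain ⟨β, ⟨⟨_, s⟩, ⟨⟨hβ, _⟩, hsim, hs⟩, rfl⟩, hleast⟩ :=
    (hScomp.image continuous_fst).exists_isLeast hne
  simp only at hβ hsim hs hleast
  change 0 ≤ s.im at hsim
  change eval (V _ + s • hfcv a) (hfPC P) = 0 at hs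
  rename_i β _
  have hsim' : 0 < s.im := by
    refine lt_of_le_of_ne hsim fun h0 => ?_
    have h1 : V β + s • hfcv a = hfcv (β • z + s.re • a) + ((α : ℂ) * Complex.I) • hfcv e := by
      have : s = (s.re : ℂ) := Complex.ext (by simp) (by simp [← h0])
      rw [this]
      ext i
      simp [hV, hfcv]
      ring
    rw [h1] at hs
    have := he.2 _ _ hs
    simp at this
    exact hα.ne' this
  have hβ0 : β = 0 := by
    by_contra hne0
    have hβpos : 0 < β := lt_of_le_of_ne hβ.1 (Ne.symm hne0)
    have hc : Continuous (fun b : ℝ => ‖eval (V b + s • hfcv a) (hfPC P)‖) :=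
      (hcont.comp (hVc.add continuous_const)).norm
    have h0 : ‖eval (V β + s • hfcv a) (hfPC P)‖ < ‖eval (hfcv a) (hfPC P)‖ * s.im ^ d := by
      rw [hs, norm_zero]; positivity
    have h1 := hc.continuousAt.eventually (gt_mem_nhds h0)
    have h2 := (h1.filter_mono (nhdsWithin_le_nhds (s := Set.Iio β))).and
      (Ioo_mem_nhdsLT hβpos)
    obtain ⟨b, h3, h4⟩ := h2.exists
    obtain ⟨s', hs', hs''⟩ := hf_close hPC _ _ _ s.im hsim' h3
    have him' : 0 < s'.im := by
      have := (Complex.abs_im_le_norm (s' - s)).trans_lt hs'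
      rw [Complex.sub_im] at this
      linarith [(abs_lt.mp this).1]
    have := hleast (hSmem b ⟨h4.1.le, h4.2.le.trans hβ.2⟩ s' him'.le hs'')
    exact absurd h4.2 (not_lt.mpr this)
  have hs0 : s ≠ 0 := by rintro rfl; simp at hsim'
  set w : ℂ := (α : ℂ) * Complex.I / s with hw
  have hsw : s * w = (α : ℂ) * Complex.I := by rw [hw, mul_div_cancel₀ _ hs0]
  have h1 : V β + s • hfcv a = s • (hfcv a + w • hfcv e) := by
    rw [smul_add, smul_smul, hsw, hβ0]
    simp [hV, add_comm]
  rw [h1, hf_eval_smul hPC] at hs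
  have hs2 := (mul_eq_zero.mp hs).resolve_left (pow_ne_zero _ hs0)
  have hwim := he.2 _ _ hs2
  have hwre : w.re < 0 := by
    by_contra hc
    push Not at hc
    have h3 := ha w.re hc
    have h4 : hfcv a + w • hfcv e = hfcv (a + w.re • e) := by
      have : w = (w.re : ℂ) := Complex.ext (by simp) (by simp [hwim])
      rw [this]
      ext i
      simp [hfcv]
    rw [h4, hf_eval_cv] at hs2
    rw [Complex.ofReal_eq_zero.mp hs2] at h3
    exact lt_irrefl _ h3
  have h5 := congrArg Complex.im hsw
  simp [hwim] at h5
  nlinarith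

theorem hf_garding (hP : P.IsHomogeneous d) {e : Fin m → ℝ} (he : hfHyp P e)
    {a : Fin m → ℝ} (ha : a ∈ hfL P e) : hfHyp P a := by
  refine ⟨by simpa using ha 0 le_rfl, fun x s hs => ?_⟩
  by_contra him
  have h0 : (s.im : ℂ) ≠ 0 := by exact_mod_cast him
  have h1 : hfcv x + s • hfcv a =
      (s.im : ℂ) • (hfcv (s.im⁻¹ • (x + s.re • a)) + Complex.I • hfcv a) := by
    ext i
    simp only [hfcv, Pi.add_apply, Pi.smul_apply, smul_eq_mul, Complex.ofReal_mul,
      Complex.ofReal_inv, Complex.ofReal_add]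
    rw [mul_add, mul_inv_cancel_left₀ h0]
    conv_lhs => rw [← Complex.re_add_im s]
    ring
  rw [h1, hf_eval_smul (hf_hom_PC hP)] at hs
  exact hf_garding_aux hP he ha _ ((mul_eq_zero.mp hs).resolve_left (pow_ne_zero _ h0))

theorem hf_L_eq_L (hP : P.IsHomogeneous d) {e : Fin m → ℝ} (he : hfHyp P e)
    {a : Fin m → ℝ} (ha : a ∈ hfL P e) : hfL P a = hfL P e := by
  have h := hf_garding hP he ha
  rw [← hf_L_eq hP h]
  rw [← hf_L_eq hP he] at ha ⊢
  exact (connectedComponentIn_eq ha).symm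

theorem hf_K_eq_K (hP : P.IsHomogeneous d) {e : Fin m → ℝ} (he : hfHyp P e)
    {a : Fin m → ℝ} (ha : a ∈ hfL P e) : hfK P a = hfK P e := by
  rw [← hf_K_eq hP he, ← hf_K_eq hP (hf_garding hP he ha), hf_L_eq_L hP he ha]

theorem hf_line_good (hP : P.IsHomogeneous d) {e : Fin m → ℝ} (he : hfHyp P e)
    {a y : Fin m → ℝ} (ha : a ∈ hfL P e) (hy : y ∈ hfK P e) :
    (hfLine P a y).Splits ∧ (∀ t : ℝ, 0 ≤ t → 0 < (hfLine P a y).eval t) := by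
  have hpa : 0 < eval a P := by simpa using ha 0 le_rfl
  have hya := hy
  rw [← hf_K_eq_K hP he ha] at hya
  constructor
  · apply hf_splits
    intro w hw
    rw [hf_aeval_line] at hw
    have hw0 : w ≠ 0 := by
      rintro rfl
      rw [zero_smul, add_zero, hf_eval_cv] at hw
      exact hpa.ne' (Complex.ofReal_eq_zero.mp hw)
    have h1 : hfcv a + w • hfcv y = w • (hfcv y + w⁻¹ • hfcv a) := by
      rw [smul_add, smul_smul, mul_inv_cancel₀ hw0, one_smul, add_comm]
    rw [h1, hf_eval_smul (hf_hom_PC hP)] at hw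
    have h2 := (hf_garding hP he ha).2 _ _
      ((mul_eq_zero.mp hw).resolve_left (pow_ne_zero _ hw0))
    rw [Complex.inv_im, div_eq_zero_iff] at h2
    rcases h2 with h2 | h2
    · linarith
    · exact absurd (Complex.normSq_eq_zero.mp h2) hw0
  · intro t ht
    rw [hf_eval_line]
    rcases eq_or_lt_of_le ht with h | h
    · simpa [← h] using hpa
    · have h1 : a + t • y = t • (y + t⁻¹ • a) := by
        rw [smul_add, smul_smul, mul_inv_cancel₀ h.ne', one_smul, add_comm]
      rw [h1, hf_eval_smul hP]
      have := hya t⁻¹ (inv_pos.mpr h)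
      positivity

theorem hf_K_add (hP : P.IsHomogeneous d) {e : Fin m → ℝ} (he : hfHyp P e)
    {x y : Fin m → ℝ} (hx : x ∈ hfK P e) (hy : y ∈ hfK P e) : x + y ∈ hfK P e := by
  intro t ht
  have ha : x + t • e ∈ hfL P e := by
    intro s hs
    rw [add_assoc, ← add_smul]
    exact hx _ (by linarith)
  have := (hf_line_good hP he ha hy).2 1 zero_le_one
  rw [hf_eval_line, one_smul] at this
  rwa [add_right_comm]

theorem hf_K_smul (hP : P.IsHomogeneous d) {e : Fin m → ℝ}
    {x : Fin m → ℝ} (hx : x ∈ hfK P e) {c : ℝ} (hc : 0 < c) : c • x ∈ hfK P e := by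
  intro t ht
  have h1 : c • x + t • e = c • (x + (t / c) • e) := by
    rw [smul_add, smul_smul, mul_div_cancel₀ _ hc.ne']
  rw [h1, hf_eval_smul hP]
  have := hx (t / c) (by positivity)
  positivity

theorem hf_K_zero (hP : P.IsHomogeneous d) {e : Fin m → ℝ} (he : hfHyp P e) :
    (0 : Fin m → ℝ) ∈ hfK P e := by
  intro t ht
  rw [zero_add, hf_eval_smul hP]
  have := he.1
  positivity
end

theorem hf_dvd_of_bound (A : Polynomial ℝ) (M : ℝ) (k : ℕ)
    (h : ∀ t : ℝ, 0 < t → t ≤ 1 → |A.eval t| ≤ M * t ^ k) : Polynomial.X ^ k ∣ A := by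
  induction k with
  | zero => simp
  | succ k ih =>
    have hM : 0 ≤ M := by
      have := (abs_nonneg _).trans (h 1 one_pos le_rfl)
      simpa using this
    obtain ⟨Q, rfl⟩ := ih fun t ht ht1 => (h t ht ht1).trans (by
      gcongr M * ?_
      exact pow_le_pow_of_le_one ht.le ht1 (by omega))
    rw [pow_succ]
    refine mul_dvd_mul_left _ (Polynomial.X_dvd_iff.mpr ?_)
    rw [Polynomial.coeff_zero_eq_eval_zero, ← abs_nonpos_iff]
    have h1 : Filter.Tendsto (fun t : ℝ => |Q.eval t|) (nhdsWithin 0 (Set.Ioi 0))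
        (nhds |Q.eval 0|) :=
      ((continuous_abs.comp Q.continuous).tendsto 0).mono_left nhdsWithin_le_nhds
    have h2 : Filter.Tendsto (fun t : ℝ => M * t) (nhdsWithin 0 (Set.Ioi 0)) (nhds (M * 0)) :=
      ((continuous_const.mul continuous_id).tendsto 0).mono_left nhdsWithin_le_nhds
    rw [mul_zero] at h2
    refine le_of_tendsto_of_tendsto h1 h2 ?_
    filter_upwards [Ioo_mem_nhdsGT (one_pos : (0 : ℝ) < 1)] with t ht
    have h3 := h t ht.1 ht.2.le
    have h4 : 0 < t ^ k := pow_pos ht.1 k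
    rw [Polynomial.eval_mul, Polynomial.eval_pow, Polynomial.eval_X, abs_mul, abs_of_pos h4,
      pow_succ] at h3
    have h5 : t ^ k * |Q.eval t| ≤ t ^ k * (M * t) := by linarith
    exact le_of_mul_le_mul_left h5 h4

theorem hf_bound_of_dvd (A : Polynomial ℝ) (k : ℕ) (T : ℝ) (h : Polynomial.X ^ k ∣ A) :
    ∃ M : ℝ, 0 < M ∧ ∀ t : ℝ, 0 < t → t ≤ T → A.eval t ≤ M * t ^ k := by
  obtain ⟨Q, rfl⟩ := h
  obtain ⟨M, hM⟩ := (isCompact_Icc (a := (0 : ℝ)) (b := T)).bddAbove_image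
    (f := fun t => Q.eval t) Q.continuous.continuousOn
  refine ⟨max M 1, lt_of_lt_of_le one_pos (le_max_right _ _), fun t ht ht1 => ?_⟩
  have h1 : Q.eval t ≤ M := hM ⟨t, ⟨ht.le, ht1⟩, rfl⟩
  rw [Polynomial.eval_mul, Polynomial.eval_pow, Polynomial.eval_X, mul_comm]
  have : 0 < t ^ k := pow_pos ht k
  gcongr
  exact h1.trans (le_max_left _ _)

noncomputable def hfA {m : ℕ} (P : MvPolynomial (Fin m) ℝ) (x e y : Fin m → ℝ) : Polynomial ℝ :=
  ∑ i, Polynomial.C (y i) * hfLine (pderiv i P) x e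

theorem hf_eval_A {m : ℕ} (P : MvPolynomial (Fin m) ℝ) (x e y : Fin m → ℝ) (t : ℝ) :
    (hfA P x e y).eval t = (Polynomial.derivative (hfLine P (x + t • e) y)).eval 0 := by
  rw [hf_deriv_line, hfA, Polynomial.eval_finsetSum, Polynomial.eval_finsetSum]
  simp [hf_eval_line]

section
variable {m d : ℕ} {P : MvPolynomial (Fin m) ℝ}

theorem hf_L_of_K {e x : Fin m → ℝ} (hx : x ∈ hfK P e) {t : ℝ} (ht : 0 < t) :
    x + t • e ∈ hfL P e := by
  intro s hs
  rw [add_assoc, ← add_smul]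
  exact hx _ (by linarith)

theorem hf_A_nonneg (hP : P.IsHomogeneous d) {e : Fin m → ℝ} (he : hfHyp P e)
    {x y : Fin m → ℝ} (hx : x ∈ hfK P e) (hy : y ∈ hfK P e) {t : ℝ} (ht : 0 < t) :
    0 ≤ (hfA P x e y).eval t := by
  obtain ⟨h1, h2⟩ := hf_line_good hP he (hf_L_of_K hx ht) hy
  have h3 := hf_coeff_nonneg _ h1 (h2 0 le_rfl) (fun t ht => (h2 t ht).ne') 1
  rw [hf_eval_A, ← Polynomial.coeff_zero_eq_eval_zero, Polynomial.coeff_derivative]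
  simpa using h3

theorem hf_A_le (hP : P.IsHomogeneous d) {e : Fin m → ℝ} (he : hfHyp P e)
    {x y : Fin m → ℝ} (hx : x ∈ hfK P e) (hy : y ∈ hfK P e) {t w : ℝ} (ht : 0 < t)
    (hw : 0 ≤ w) :
    eval (x + t • e) P + w * (hfA P x e y).eval t ≤ eval (x + t • e + w • y) P := by
  obtain ⟨h1, h2⟩ := hf_line_good hP he (hf_L_of_K hx ht) hy
  have h3 := hf_coeff_nonneg _ h1 (h2 0 le_rfl) (fun t ht => (h2 t ht).ne')
  have h4 := hf_eval_one_ge _ h3 w hw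
  rw [hf_eval_line, hf_eval_line, ← hf_eval_A] at h4
  simpa using h4

theorem hf_mono (hP : P.IsHomogeneous d) {e : Fin m → ℝ} (he : hfHyp P e)
    {a y : Fin m → ℝ} (ha : a ∈ hfL P e) (hy : y ∈ hfK P e) :
    eval a P ≤ eval (a + y) P := by
  obtain ⟨h1, h2⟩ := hf_line_good hP he ha hy
  have h3 := hf_coeff_nonneg _ h1 (h2 0 le_rfl) (fun t ht => (h2 t ht).ne')
  have h4 := hf_eval_one_ge _ h3 1 zero_le_one
  have h5 := h3 1
  rw [← Polynomial.coeff_zero_eq_eval_zero (Polynomial.derivative _),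
    Polynomial.coeff_derivative, hf_eval_line, hf_eval_line] at h4
  simp at h4
  linarith

/-- tangent order bound -/
theorem hf_A_dvd_pred (hP : P.IsHomogeneous d) {e : Fin m → ℝ} (he : hfHyp P e)
    {x y : Fin m → ℝ} (hx : x ∈ hfK P e) (hy : y ∈ hfK P e) {r : ℕ}
    (hr : Polynomial.X ^ (r + 1) ∣ hfLine P x e) : Polynomial.X ^ r ∣ hfA P x e y := by
  obtain ⟨ε, hε, hεL⟩ : ∃ ε : ℝ, 0 < ε ∧ e + (-ε) • y ∈ hfL P e := by
    have hc : Continuous (fun ε : ℝ => e + (-ε) • y) := by fun_prop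
    have h1 := hc.continuousAt.eventually_mem ((hf_L_open hP he.1).mem_nhds
      (show e + (-(0 : ℝ)) • y ∈ hfL P e by simpa using hf_e_mem_L hP he.1))
    obtain ⟨ε, h2, h3⟩ := ((h1.filter_mono (nhdsWithin_le_nhds (s := Set.Ioi 0))).and
      self_mem_nhdsWithin).exists
    exact ⟨ε, h3, h2⟩
  have hεK : e + (-ε) • y ∈ hfK P e := fun t ht => hεL t ht.le
  obtain ⟨M, hM, hMb⟩ := hf_bound_of_dvd _ _ 2 hr
  refine hf_dvd_of_bound _ (M * 2 ^ (r + 1) / ε) r fun t ht ht1 => ?_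
  rw [abs_of_nonneg (hf_A_nonneg hP he hx hy ht)]
  have h1 := hf_A_le hP he hx hy ht (w := t * ε) (by positivity)
  have h0 := hx t ht
  have hεy : (t * ε) • y ∈ hfK P e := hf_K_smul hP hy (by positivity)
  have hL2 : x + t • e + (t * ε) • y ∈ hfL P e := by
    rw [add_right_comm]
    exact hf_L_of_K (hf_K_add hP he hx hεy) ht
  have h2 := hf_mono hP he hL2 (hf_K_smul hP hεK ht)
  have h3 : x + t • e + (t * ε) • y + t • (e + (-ε) • y) = x + (2 * t) • e := by
    module
  have h4 := hMb (2 * t) (by positivity) (by linarith)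
  rw [h3] at h2
  rw [hf_eval_line, mul_pow] at h4
  have h5 : t * (ε * (hfA P x e y).eval t) ≤ t * (M * 2 ^ (r + 1) * t ^ r) := by
    have : t * (M * 2 ^ (r + 1) * t ^ r) = M * (2 ^ (r + 1) * t ^ (r + 1)) := by ring
    rw [this]
    linarith
  have h6 := le_of_mul_le_mul_left h5 ht
  rw [div_mul_eq_mul_div, le_div_iff₀ hε]
  linarith

theorem hf_A_dvd_face (hP : P.IsHomogeneous d) {e : Fin m → ℝ} (he : hfHyp P e)
    {x y : Fin m → ℝ} (hx : x ∈ hfK P e) (hy : y ∈ hfK P e) {r : ℕ}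
    (hr : Polynomial.X ^ r ∣ hfLine P (x + y) e) : Polynomial.X ^ r ∣ hfA P x e y := by
  obtain ⟨M, hM, hMb⟩ := hf_bound_of_dvd _ _ 1 hr
  refine hf_dvd_of_bound _ M r fun t ht ht1 => ?_
  rw [abs_of_nonneg (hf_A_nonneg hP he hx hy ht)]
  have h1 := hf_A_le hP he hx hy ht (w := 1) zero_le_one
  have h0 := hx t ht
  have h2 := hMb t ht ht1
  rw [hf_eval_line, add_right_comm] at h2
  rw [one_smul] at h1
  linarith

theorem hf_sub_mem (hP : P.IsHomogeneous d) {e : Fin m → ℝ} (he : hfHyp P e)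
    {x y : Fin m → ℝ} (hx : x ∈ hfK P e) (hy : y ∈ hfK P e) {r : ℕ} {B : Polynomial ℝ}
    (hB : hfLine P x e = Polynomial.X ^ r * B) (hB0 : B.eval 0 ≠ 0)
    (hr : Polynomial.X ^ r ∣ hfA P x e y) : ∃ ε : ℝ, 0 < ε ∧ x + (-ε) • y ∈ hfK P e := by
  obtain ⟨Q, hQ⟩ := hr
  have hBne : ∀ t ∈ Set.Icc (0 : ℝ) 1, B.eval t ≠ 0 := by
    intro t ht h
    rcases eq_or_lt_of_le ht.1 with h0 | h0
    · rw [← h0] at h; exact hB0 h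
    · have h1 := hx t h0
      rw [← hf_eval_line, hB, Polynomial.eval_mul, h, mul_zero] at h1
      exact lt_irrefl _ h1
  obtain ⟨M₀, hM₀⟩ := (isCompact_Icc (a := (0 : ℝ)) (b := 1)).bddAbove_image
    (f := fun t => Q.eval t / B.eval t)
    (Q.continuous.continuousOn.div B.continuous.continuousOn hBne)
  set M := max M₀ 1 with hMdef
  have hM : 0 < M := lt_of_lt_of_le one_pos (le_max_right _ _)
  have hle : ∀ t : ℝ, 0 < t → t ≤ 1 → (hfA P x e y).eval t ≤ M * eval (x + t • e) P := by
    intro t ht ht1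
    have h1 : Q.eval t / B.eval t ≤ M₀ := hM₀ ⟨t, ⟨ht.le, ht1⟩, rfl⟩
    have h2 := hx t ht
    rw [← hf_eval_line, hB] at h2
    rw [← hf_eval_line, hB, hQ]
    simp only [Polynomial.eval_mul, Polynomial.eval_pow, Polynomial.eval_X] at h2 ⊢
    have h3 : 0 < t ^ r := pow_pos ht r
    have h4 : 0 < B.eval t := pos_of_mul_pos_right h2 h3.le
    rw [div_le_iff₀ h4] at h1
    have h5 : Q.eval t ≤ M * B.eval t :=
      h1.trans (mul_le_mul_of_nonneg_right (le_max_left _ _) h4.le)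
    calc t ^ r * Q.eval t ≤ t ^ r * (M * B.eval t) := mul_le_mul_of_nonneg_left h5 h3.le
      _ = _ := by ring
  have hc : Continuous (fun ε : ℝ => x + (1 : ℝ) • e + (-ε) • y) := by fun_prop
  have h1 := hc.continuousAt.eventually_mem ((hf_L_open hP he.1).mem_nhds
    (show x + (1 : ℝ) • e + (-(0 : ℝ)) • y ∈ hfL P e by
      simpa using hf_L_of_K hx one_pos))
  obtain ⟨ε, h2, h3⟩ := ((h1.filter_mono (nhdsWithin_le_nhds (s := Set.Ioi 0))).and
    (Ioo_mem_nhdsGT (inv_pos.mpr hM))).exists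
  refine ⟨ε, h3.1, fun t ht => ?_⟩
  rcases le_or_gt t 1 with ht1 | ht1
  · obtain ⟨g1, g2⟩ := hf_line_good hP he (hf_L_of_K hx ht) hy
    have h5 := hf_pos_left _ g1 (g2 0 le_rfl) (fun t ht => (g2 t ht).ne') M (by
      rw [← hf_eval_A, hf_eval_line, zero_smul, add_zero]
      exact hle t ht ht1) ε h3.1.le (by
        have := mul_lt_mul_of_pos_right h3.2 hM
        rwa [inv_mul_cancel₀ hM.ne'] at this)
    rw [hf_eval_line] at h5
    rwa [add_right_comm]
  · have h5 := h2 (t - 1) (by linarith)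
    have h6 : x + (1 : ℝ) • e + (-ε) • y + (t - 1) • e = x + (-ε) • y + t • e := by module
    rwa [h6] at h5
end


/-- **Renegar.** Every face of a closed hyperbolicity cone is exposed. -/
theorem hyperbolicityCone_faces_exposed {m d : ℕ}
    (P : MvPolynomial (Fin m) ℝ) (hhom : P.IsHomogeneous d)
    (e : Fin m → ℝ) (he : e ≠ 0) (hhyp : IsHyperbolicWrt P e)
    (C : Set (Fin m → ℝ))
    (hC : C = closure (connectedComponentIn {x | 0 < eval x P} e)) :
    ∀ F : Set (Fin m → ℝ), IsFaceOf C F → IsExposedFaceOf C F := by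
  have hh := hf_hyp_of hhyp
  rw [hf_L_eq hhom hh, hf_K_eq hhom hh] at hC
  subst hC
  rintro F ⟨⟨x₀, hx₀⟩, hconv, hsub, hface⟩
  have h0K := hf_K_zero hhom hh
  have h0F : (0 : Fin m → ℝ) ∈ F := by
    refine (hface _ (hf_K_smul hhom (hsub hx₀) two_pos) 0 h0K (1 / 2) (by norm_num)
      (by norm_num) ?_).2
    have : (1 / 2 : ℝ) • (2 : ℝ) • x₀ + (1 - 1 / 2 : ℝ) • (0 : Fin m → ℝ) = x₀ := by module
    rwa [this]
  have hsm : ∀ z ∈ F, ∀ c : ℝ, 0 < c → c • z ∈ F := by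
    intro z hz c hc
    rcases le_or_gt c 1 with h | h
    · have := hconv hz h0F hc.le (sub_nonneg.mpr h) (by ring)
      simpa using this
    · refine (hface _ (hf_K_smul hhom (hsub hz) hc) 0 h0K c⁻¹ (by positivity)
        (inv_lt_one_of_one_lt₀ h) ?_).1
      rwa [smul_smul, inv_mul_cancel₀ hc.ne', one_smul, smul_zero, add_zero]
  have hadd : ∀ z ∈ F, ∀ y ∈ F, z + y ∈ F := by
    intro z hz y hy
    have h1 := hsm _ (hconv hz hy (a := 1 / 2) (b := 1 / 2) (by norm_num) (by norm_num)
      (by norm_num)) 2 two_pos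
    have h2 : (2 : ℝ) • ((1 / 2 : ℝ) • z + (1 / 2 : ℝ) • y) = z + y := by module
    rwa [h2] at h1
  -- orders
  have hord : ∀ z ∈ F, ∃ n : ℕ, ∃ B : Polynomial ℝ,
      hfLine P z e = Polynomial.X ^ n * B ∧ B.eval 0 ≠ 0 := by
    intro z hz
    have hne : hfLine P z e ≠ 0 := by
      intro h
      have h1 := hsub hz 1 one_pos
      rw [← hf_eval_line, h] at h1
      simp at h1
    obtain ⟨B, hB, hB'⟩ := Polynomial.exists_eq_pow_rootMultiplicity_mul_and_not_dvd _ hne 0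
    rw [Polynomial.C_0, sub_zero] at hB hB'
    refine ⟨_, B, hB, fun h => hB' ?_⟩
    rwa [Polynomial.X_dvd_iff, Polynomial.coeff_zero_eq_eval_zero]
  have hex : ∃ n : ℕ, ∃ z ∈ F, ∃ B : Polynomial ℝ,
      hfLine P z e = Polynomial.X ^ n * B ∧ B.eval 0 ≠ 0 := by
    obtain ⟨n, B, hB⟩ := hord x₀ hx₀
    exact ⟨n, x₀, hx₀, B, hB⟩
  classical
  obtain ⟨x, hx, B, hB, hB0⟩ := Nat.find_spec hex
  have hmin : ∀ z ∈ F, Polynomial.X ^ (Nat.find hex) ∣ hfLine P z e := by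
    intro z hz
    obtain ⟨n, B', hB', h0⟩ := hord z hz
    have := Nat.find_min' hex ⟨z, hz, B', hB', h0⟩
    rw [hB']
    exact (pow_dvd_pow _ this).trans (dvd_mul_right _ _)
  generalize Nat.find hex = r at hB hmin
  have hxK := hsub hx
  have hback : ∀ y ∈ hfK P e, Polynomial.X ^ r ∣ hfA P x e y → y ∈ F := by
    intro y hy hdvd
    obtain ⟨ε, hε, hεK⟩ := hf_sub_mem hhom hh hxK hy hB hB0 hdvd
    have h1 : (2 * ε) • y ∈ F := by
      refine (hface _ (hf_K_smul hhom hεK two_pos) _ (hf_K_smul hhom hy (by positivity))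
        (1 / 2) (by norm_num) (by norm_num) ?_).2
      have : (1 / 2 : ℝ) • (2 : ℝ) • (x + (-ε) • y) + (1 - 1 / 2 : ℝ) • (2 * ε) • y = x := by
        module
      rwa [this]
    have h2 := hsm _ h1 (2 * ε)⁻¹ (by positivity)
    rwa [smul_smul, inv_mul_cancel₀ (by positivity), one_smul] at h2
  by_cases hFC : F = hfK P e
  · exact Or.inl hFC
  right
  cases r with
  | zero => exact absurd (hsub.antisymm fun y hy => hback y hy (by simp)) hFC
  | succ r =>
    have hcoef : ∀ y, affEval (fun i => (hfLine (pderiv i P) x e).coeff r) 0 y =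
        (hfA P x e y).coeff r := by
      intro y
      simp only [affEval, hfA, Polynomial.finsetSum_coeff, Polynomial.coeff_C_mul, zero_add]
      exact Finset.sum_congr rfl fun i _ => mul_comm _ _
    have hdv : ∀ y ∈ hfK P e, ∃ Q : Polynomial ℝ, hfA P x e y = Polynomial.X ^ r * Q ∧
        (hfA P x e y).coeff r = Q.eval 0 := by
      intro y hy
      obtain ⟨Q, hQ⟩ := hf_A_dvd_pred hhom hh hxK hy (hmin x hx)
      refine ⟨Q, hQ, ?_⟩
      rw [hQ, ← Polynomial.coeff_zero_eq_eval_zero]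
      simpa using Polynomial.coeff_X_pow_mul Q r 0
    have hz1 : ∀ y ∈ hfK P e, (hfA P x e y).coeff r = 0 → y ∈ F := by
      intro y hy h
      obtain ⟨Q, hQ, hQ0⟩ := hdv y hy
      apply hback y hy
      rw [hQ, pow_succ]
      refine mul_dvd_mul_left _ (Polynomial.X_dvd_iff.mpr ?_)
      rw [Polynomial.coeff_zero_eq_eval_zero, ← hQ0, h]
    have hz2 : ∀ y ∈ F, (hfA P x e y).coeff r = 0 := by
      intro y hy
      obtain ⟨Q, hQ⟩ := hf_A_dvd_face hhom hh hxK (hsub hy) (hmin _ (hadd x hx y hy))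
      rw [hQ, Polynomial.coeff_X_pow_mul']
      simp
    refine ⟨fun i => (hfLine (pderiv i P) x e).coeff r, 0, ?_, ?_, ?_, ?_⟩
    · intro h
      refine hFC (hsub.antisymm fun y hy => hz1 y hy ?_)
      rw [← hcoef, h]
      rfl
    · intro y hy
      rw [hcoef]
      obtain ⟨Q, hQ, hQ0⟩ := hdv y hy
      rw [hQ0]
      have h1 : Filter.Tendsto (fun t : ℝ => Q.eval t) (nhdsWithin 0 (Set.Ioi 0))
          (nhds (Q.eval 0)) := (Q.continuous.tendsto 0).mono_left nhdsWithin_le_nhds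
      refine ge_of_tendsto h1 ?_
      filter_upwards [self_mem_nhdsWithin] with t ht
      have h2 := hf_A_nonneg hhom hh hxK hy (t := t) ht
      rw [hQ, Polynomial.eval_mul, Polynomial.eval_pow, Polynomial.eval_X] at h2
      exact nonneg_of_mul_nonneg_right h2 (pow_pos ht r)
    · exact ⟨x, by rw [Set.mem_ofPred_eq, hcoef]; exact hz2 x hx, hxK⟩
    · ext y
      constructor
      · rintro ⟨h1, h2⟩
        rw [Set.mem_ofPred_eq, hcoef] at h1
        exact hz1 y h2 h1
      · intro hy
        exact ⟨by rw [Set.mem_ofPred_eq, hcoef]; exact hz2 y hy, hsub hy⟩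
end
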